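/- arXiv:math/0209257 — 11 statements merged into one kernel-verified Lean document; each statement's English description precedes it below -/
import Mathlib

section
/- Let R be a Noetherian ring and N ⊊ M finitely generated R-modules with Ass(M/N) = {P₁, ..., P_s}. If for each i, Q_i is a P_i-primary component of N in M (i.e., Q_i appears as the P_i-primary component in some irredundant minimal primary decomposition of N in M), then N = Q₁ ∩ Q₂ ∩ ... ∩ Q_s. -/
open Submodule

variable {R M : Type*} [CommRing R] [AddCommGroup M] [Module R M]

/-- The saturation `(N :_M J^∞) = ∪ₙ (N :_M Jⁿ)`. -/
def sat (J : Ideal R) (N : Submodule R M) : Submodule R M :=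
  ⨆ n : ℕ, ⨅ r ∈ (J ^ n : Ideal R), N.comap (LinearMap.lsmul R M r)

/-- `Jⁿ L ⊓ N ≤ J^(n-k) N` for all `n ≥ k`, i.e. the Artin–Rees number is at most `k`. -/
def ARle (J : Ideal R) (N L : Submodule R M) (k : ℕ) : Prop :=
  ∀ n, k ≤ n → (J ^ n • L) ⊓ N ≤ J ^ (n - k) • N

/-- The Artin–Rees number `AR(J, N ⊆ L)`. -/
noncomputable def AR (J : Ideal R) (N L : Submodule R M) : ℕ := sInf {k | ARle J N L k}

/-- `N = ⨅ i, Q i` is an irredundant minimal primary decomposition, with `Q i` being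
`P i`-primary. -/
def IsMinPD (N : Submodule R M) {s : ℕ} (P : Fin s → Ideal R) (Q : Fin s → Submodule R M) :
    Prop :=
  (∀ i, associatedPrimes R (M ⧸ Q i) = {P i}) ∧
  Function.Injective P ∧
  N = ⨅ i, Q i ∧
  ∀ i : Fin s, N ≠ ⨅ j ∈ ({i}ᶜ : Set (Fin s)), Q j

/-- `Q` is a `P`-primary component of `N` in `M`: it occurs as the `P`-primary component of
some irredundant minimal primary decomposition of `N` in `M`. -/
def IsPrimaryComponent (N : Submodule R M) (P : Ideal R) (Q : Submodule R M) : Prop :=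
  ∃ (s : ℕ) (P' : Fin s → Ideal R) (Q' : Fin s → Submodule R M) (i : Fin s),
    IsMinPD N P' Q' ∧ P' i = P ∧ Q' i = Q
/-- Compatibility (Theorem 1.1): if `Ass(M/N) = {P₁,…,P_s}` and each `Q i` is a
`P i`-primary component of `N` in `M`, then `N = Q₁ ∩ ⋯ ∩ Q_s`. -/
theorem compatibility [IsNoetherianRing R] [Module.Finite R M]
    (N : Submodule R M) (hN : N ≠ ⊤) (s : ℕ) (P : Fin s → Ideal R)
    (hinj : Function.Injective P)
    (hAss : associatedPrimes R (M ⧸ N) = Set.range P)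
    (Q : Fin s → Submodule R M)
    (hQ : ∀ i, IsPrimaryComponent N (P i) (Q i)) :
    N = ⨅ i, Q i := by
  classical
  apply le_antisymm
  · refine le_iInf fun i => ?_
    obtain ⟨t, P', Q', j, ⟨-, -, h, -⟩, -, hj⟩ := hQ i
    rw [h, ← hj]
    exact iInf_le _ j
  intro y hy
  by_contra hyN
  -- the nonzero submodule `(⨅ Q i) / N` of `M / N` has an associated prime
  let K : Submodule R (M ⧸ N) := (⨅ i, Q i).map N.mkQ
  let y' : K := ⟨N.mkQ y, Submodule.mem_map_of_mem hy⟩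
  have hy' : y' ≠ 0 := by
    intro h
    apply hyN
    have := congrArg Subtype.val h
    simpa [y'] using this
  obtain ⟨I, hI, -⟩ := exists_le_isAssociatedPrime_of_isNoetherianRing R y' hy'
  have hI2 : I ∈ associatedPrimes R (M ⧸ N) :=
    hI.map_of_injective (f := K.subtype) K.injective_subtype
  rw [hAss] at hI2
  obtain ⟨i, rfl⟩ := hI2
  obtain ⟨hp, ⟨k, hk⟩, hkI⟩ := isAssociatedPrime_iff.1 hI
  obtain ⟨x, hx, rfl⟩ := hk
  have hmem : ∀ r, r ∈ P i ↔ r • x ∈ N := by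
    intro r
    rw [hkI, Submodule.mem_colon_singleton, Submodule.mem_bot, Subtype.ext_iff]
    simp [← Submodule.Quotient.mk_smul]
  have hxi : x ∈ Q i := (Submodule.mem_iInf _).1 hx i
  obtain ⟨t, P', Q', j, ⟨hA, hPinj, h, -⟩, hPj, hQj⟩ := hQ i
  have hle : (Finset.univ.inf fun l => (Q' l).colon {x}) ≤ P i := by
    intro r hr
    rw [hmem, h, Submodule.mem_iInf]
    intro l
    have := Finset.inf_le (f := fun l => (Q' l).colon {x}) (Finset.mem_univ l) hr
    simpa [Submodule.mem_colon_singleton] using this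
  obtain ⟨l, -, hl⟩ := (Ideal.IsPrime.inf_le' hp).1 hle
  have hass : P i ∈ associatedPrimes R (M ⧸ Q' l) := by
    refine isAssociatedPrime_iff.2 ⟨hp, (Q' l).mkQ x, ?_⟩
    ext r
    rw [Submodule.mem_colon_singleton, Submodule.mem_bot, ← map_smul, Submodule.mkQ_apply,
      Submodule.Quotient.mk_eq_zero]
    constructor
    · intro hr
      have := (hmem r).1 hr
      rw [h, Submodule.mem_iInf] at this
      exact this l
    · intro hr
      exact hl (Submodule.mem_colon_singleton.2 hr)
  rw [hA l, Set.mem_singleton_iff, ← hPj] at hass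
  have hjl := hPinj hass
  subst hjl
  apply hp.ne_top
  rw [Ideal.eq_top_iff_one]
  apply hl
  rw [Submodule.mem_colon_singleton, one_smul, hQj]
  exact hxi
end

section
/- Let R be a Noetherian ring, N ⊊ M finitely generated R-modules, and I an ideal of R. If N = Q₁ ∩ ... ∩ Q_s is an irredundant minimal primary decomposition with Q_i being P_i-primary, then the intersection of those Q_i for which I is not contained in P_i equals the saturation (N :_M I^∞) = ∪_n (N :_M I^n). In particular, this partial intersection is independent of the chosen primary decomposition. -/
open Submodule

variable {R M : Type*} [CommRing R] [AddCommGroup M] [Module R M]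

theorem aux_nil [IsNoetherianRing R] {P I : Ideal R} {Q : Submodule R M}
    (h : associatedPrimes R (M ⧸ Q) = {P}) (hI : I ≤ P) (x : M) :
    ∃ n : ℕ, ∀ r ∈ I ^ n, r • x ∈ Q := by
  have h1 : P ≤ ((⊥ : Submodule R (M ⧸ Q)).colon {Q.mkQ x}).radical := by
    rw [← Ideal.sInf_minimalPrimes]
    refine le_sInf fun J hJ => ?_
    have hJ' : J ∈ associatedPrimes R (M ⧸ Q) := by
      rw [AssociatedPrimes.mem_iff, isAssociatedPrime_iff]
      exact ⟨hJ.1.1, exists_eq_colon_of_mem_minimalPrimes hJ⟩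
    rw [h] at hJ'
    exact (Set.mem_singleton_iff.1 hJ').ge
  obtain ⟨n, hn⟩ := Ideal.exists_pow_le_of_le_radical_of_fg (hI.trans h1) (IsNoetherian.noetherian I)
  refine ⟨n, fun r hr => ?_⟩
  have := hn hr
  rw [mem_colon_singleton, mem_bot, ← map_smul] at this
  exact (Submodule.Quotient.mk_eq_zero Q).1 this

theorem aux_reg [IsNoetherianRing R] {P : Ideal R} {Q : Submodule R M}
    (h : associatedPrimes R (M ⧸ Q) = {P}) {r : R} (hr : r ∉ P) {x : M} (hx : r • x ∈ Q) :
    x ∈ Q := by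
  by_contra hxQ
  have h0 : Q.mkQ x ≠ 0 := by simpa using hxQ
  obtain ⟨J, hJ, hle⟩ := exists_le_isAssociatedPrime_of_isNoetherianRing R _ h0
  have hJ' : J ∈ associatedPrimes R (M ⧸ Q) := hJ
  rw [h, Set.mem_singleton_iff] at hJ'
  subst hJ'
  apply hr
  apply hle
  rw [mem_colon_singleton, mem_bot, ← map_smul]
  exact (Submodule.Quotient.mk_eq_zero Q).2 hx

theorem aux_mem_sat (I : Ideal R) (N : Submodule R M) (x : M) :
    x ∈ sat I N ↔ ∃ n : ℕ, ∀ r ∈ I ^ n, r • x ∈ N := by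
  unfold sat
  rw [mem_iSup_of_directed]
  · simp
  · apply Monotone.directed_le
    intro a b hab
    exact le_iInf₂ fun r hr => iInf₂_le r (Ideal.pow_le_pow_right hab hr)

/-- Observation 0.3(1): the intersection of the primary components whose primes do not
contain `I` equals the saturation `(N :_M I^∞)`. -/
theorem partial_intersection_eq_saturation [IsNoetherianRing R] [Module.Finite R M]
    (N : Submodule R M) (hN : N ≠ ⊤) (s : ℕ) (P : Fin s → Ideal R)
    (Q : Fin s → Submodule R M) (hPD : IsMinPD N P Q) (I : Ideal R) :
    (⨅ i ∈ {i : Fin s | ¬ I ≤ P i}, Q i) = sat I N := by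
  obtain ⟨hA, -, rfl, -⟩ := hPD
  ext x
  rw [aux_mem_sat]
  simp only [mem_iInf, Set.mem_ofPred_eq]
  constructor
  · intro hx
    have key : ∀ i, ∃ n : ℕ, ∀ r ∈ I ^ n, r • x ∈ Q i := by
      intro i
      by_cases hi : I ≤ P i
      · exact aux_nil (hA i) hi x
      · exact ⟨0, fun r _ => (Q i).smul_mem r (hx i hi)⟩
    choose n hn using key
    exact ⟨Finset.univ.sup n, fun r hr i =>
      hn i r (Ideal.pow_le_pow_right (Finset.le_sup (Finset.mem_univ i)) hr)⟩
  · rintro ⟨n, hn⟩ i hi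
    obtain ⟨r, hrI, hrP⟩ := SetLike.not_le_iff_exists.1 hi
    have hp : (P i).IsPrime :=
      IsAssociatedPrime.isPrime (M := M ⧸ Q i)
        (show P i ∈ associatedPrimes R (M ⧸ Q i) by rw [hA i]; rfl)
    exact aux_reg (hA i) (fun h => hrP (hp.mem_of_pow_mem n h))
      (hn (r ^ n) (Ideal.pow_mem_pow hrI n) i)
end

section
/- Let R be a Noetherian ring, N ⊊ M finitely generated R-modules, and X ⊆ Ass(M/N). If the primary decompositions of N in M are independent over X (i.e., for any two irredundant minimal primary decompositions of N in M, the intersections of the primary components corresponding to primes in X agree), then X is an open subset of Ass(M/N) in the topology induced from Spec(R), i.e., X is stable under specialization within Ass(M/N): if P ∈ X, P' ∈ Ass(M/N), and P' ⊆ P, then P' ∈ X. -/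
open Submodule

variable {R M : Type*} [CommRing R] [AddCommGroup M] [Module R M]

/-- Primary decompositions of `N ⊆ M` are independent over `X`. -/
def IndepOver (N : Submodule R M) (X : Set (Ideal R)) : Prop :=
  ∀ (s : ℕ) (P : Fin s → Ideal R) (Q Q' : Fin s → Submodule R M),
    IsMinPD N P Q → IsMinPD N P Q' →
    (⨅ i ∈ {i : Fin s | P i ∈ X}, Q i) = ⨅ i ∈ {i : Fin s | P i ∈ X}, Q' i

lemma aux_mem_ass_iff [IsNoetherianRing R] (N : Submodule R M) (p : Ideal R) :
    p ∈ associatedPrimes R (M ⧸ N) ↔ p.IsPrime ∧ ∃ x : M, ∀ r, r ∈ p ↔ r • x ∈ N := by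
  rw [AssociatedPrimes.mem_iff, isAssociatedPrime_iff, and_congr_right_iff]
  intro _
  rw [N.mkQ_surjective.exists]
  refine exists_congr fun x => ?_
  rw [SetLike.ext_iff]
  refine forall_congr' fun r => ?_
  rw [Submodule.mem_colon_singleton, ← map_smul, Submodule.mem_bot, Submodule.mkQ_apply,
    Submodule.Quotient.mk_eq_zero]

lemma aux_ass_eq [IsNoetherianRing R] (Q : Submodule R M) (P : Ideal R) [hP : P.IsPrime]
    (hQ : Q ≠ ⊤) (n : ℕ) (hn : P ^ n • (⊤ : Submodule R M) ≤ Q)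
    (h : ∀ (r : R) (x : M), r ∉ P → r • x ∈ Q → x ∈ Q) :
    associatedPrimes R (M ⧸ Q) = {P} := by
  have key : ∀ p ∈ associatedPrimes R (M ⧸ Q), p = P := by
    intro p hp
    obtain ⟨hp, x, hx⟩ := (aux_mem_ass_iff Q p).1 hp
    apply le_antisymm
    · intro r hr
      by_contra hrP
      have := h r x hrP ((hx r).1 hr)
      exact hp.ne_top ((Ideal.eq_top_iff_one _).2 ((hx 1).2 (by simpa using this)))
    · apply hp.le_of_pow_le (n := n)
      intro r hr
      exact (hx r).2 (hn (Submodule.smul_mem_smul hr trivial))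
  have : Nontrivial (M ⧸ Q) := Submodule.Quotient.nontrivial_iff.2 hQ
  obtain ⟨p, hp⟩ := associatedPrimes.nonempty R (M ⧸ Q)
  ext q
  refine ⟨key q, ?_⟩
  rintro rfl
  rwa [← key p hp]

lemma aux_minPD [IsNoetherianRing R] (N : Submodule R M) {s : ℕ} (P : Fin s → Ideal R)
    (Q : Fin s → Submodule R M) (h1 : ∀ i, associatedPrimes R (M ⧸ Q i) = {P i})
    (h2 : Function.Injective P) (h3 : N = ⨅ i, Q i)
    (h4 : ∀ i, P i ∈ associatedPrimes R (M ⧸ N)) : IsMinPD N P Q := by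
  classical
  refine ⟨h1, h2, h3, fun i hi => ?_⟩
  obtain ⟨hp, x, hx⟩ := (aux_mem_ass_iff N (P i)).1 (h4 i)
  have hle : (Finset.univ.erase i).inf (fun j => (Q j).colon {x}) ≤ P i := by
    intro r hr
    rw [hx, hi]
    simp only [Submodule.mem_finsetInf, Submodule.mem_colon_singleton, Finset.mem_erase] at hr
    simp only [Submodule.mem_iInf]
    intro j hj
    exact hr j ⟨by simpa using hj, Finset.mem_univ _⟩
  obtain ⟨j, hj, hji⟩ := (Ideal.IsPrime.inf_le' hp).1 hle
  have : P i ∈ associatedPrimes R (M ⧸ Q j) := by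
    rw [aux_mem_ass_iff]
    refine ⟨hp, x, fun r => ⟨fun hr => ?_, fun hr => hji (Submodule.mem_colon_singleton.2 hr)⟩⟩
    have := (hx r).1 hr
    rw [h3, Submodule.mem_iInf] at this
    exact this j
  rw [h1] at this
  exact (Finset.mem_erase.1 hj).1 (h2 this).symm

/-- The `P`-saturation of a submodule. -/
def auxSat (P : Ideal R) [hP : P.IsPrime] (L : Submodule R M) : Submodule R M where
  carrier := {x | ∃ r, r ∉ P ∧ r • x ∈ L}
  zero_mem' := ⟨1, fun h => hP.ne_top ((Ideal.eq_top_iff_one _).2 h), by simp⟩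
  add_mem' := by
    rintro x y ⟨r, hr, hx⟩ ⟨t, ht, hy⟩
    refine ⟨r * t, fun h => (hP.mem_or_mem h).elim hr ht, ?_⟩
    rw [smul_add]
    refine L.add_mem ?_ ?_
    · rw [mul_comm, mul_smul]; exact L.smul_mem _ hx
    · rw [mul_smul]; exact L.smul_mem _ hy
  smul_mem' := by
    rintro c x ⟨r, hr, hx⟩
    exact ⟨r, hr, by rw [smul_comm]; exact L.smul_mem _ hx⟩

lemma aux_krull [IsNoetherianRing R] [Module.Finite R M] (N : Submodule R M) (P : Ideal R)
    [hP : P.IsPrime] (x : M) (k : ℕ)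
    (h : ∀ n, k ≤ n → x ∈ auxSat P (N ⊔ P ^ n • (⊤ : Submodule R M))) :
    ∃ r, r ∉ P ∧ r • x ∈ N := by
  obtain ⟨c, hc⟩ := Ideal.exists_pow_inf_eq_pow_smul P (Submodule.span R {N.mkQ x})
  obtain ⟨r, hr, hrx⟩ := h (c + 1 + k) (by omega)
  have h1 : N.mkQ (r • x) ∈ P ^ (c + 1) • (⊤ : Submodule R (M ⧸ N)) := by
    obtain ⟨y, hy, z, hz, hyz⟩ := Submodule.mem_sup.1 hrx
    rw [← hyz, map_add]
    have h0 : N.mkQ y = 0 := by simpa using hy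
    rw [h0, zero_add]
    have h2 : N.mkQ z ∈ (P ^ (c + 1 + k) • (⊤ : Submodule R M)).map N.mkQ :=
      Submodule.mem_map_of_mem hz
    rw [Submodule.map_smul''] at h2
    exact Submodule.smul_mono (Ideal.pow_le_pow_right (by omega)) le_top h2
  have h2 : N.mkQ (r • x) ∈ P ^ (c + 1) • (⊤ : Submodule R (M ⧸ N)) ⊓
      Submodule.span R {N.mkQ x} :=
    ⟨h1, by rw [map_smul]; exact Submodule.smul_mem _ _ (Submodule.mem_span_singleton_self _)⟩
  rw [hc (c + 1) (by omega)] at h2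
  have h3 : N.mkQ (r • x) ∈ P • Submodule.span R {N.mkQ x} :=
    Submodule.smul_mono (by simp) inf_le_right h2
  obtain ⟨p, hp, hpx⟩ := Submodule.mem_smul_span_singleton.1 h3
  refine ⟨r - p, fun hh => hr (by simpa using P.add_mem hh hp), ?_⟩
  have : N.mkQ ((r - p) • x) = 0 := by
    rw [sub_smul, map_sub, map_smul N.mkQ p, hpx, sub_self]
  rwa [Submodule.mkQ_apply, Submodule.Quotient.mk_eq_zero] at this

lemma aux_exists [IsNoetherianRing R] [Module.Finite R M] (N : Submodule R M) :
    ∃ (s : ℕ) (P : Fin s → Ideal R) (Q : Fin s → Submodule R M),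
      Function.Injective P ∧ N = ⨅ i, Q i ∧ (∀ i, (Q i).IsPrimary) ∧
      (∀ i, P i = ((Q i).colon Set.univ).radical) ∧
      Set.range P = associatedPrimes R (M ⧸ N) := by
  obtain ⟨t, ht⟩ := Submodule.IsLasker.exists_isMinimalPrimaryDecomposition
    (Submodule.isLasker R M) N
  let e := t.equivFin.symm
  refine ⟨t.card, fun i => (((e i).1).colon Set.univ).radical, fun i => (e i).1, ?_, ?_, ?_,
    fun _ => rfl, ?_⟩
  · intro i j hij
    exact e.injective (Subtype.ext (Submodule.IsMinimalPrimaryDecomposition.injOn N t ht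
      (e i).2 (e j).2 hij))
  · rw [← ht.inf_eq, e.iInf_comp (g := fun q : t => q.1), Finset.inf_eq_iInf, iInf_subtype]
    rfl
  · exact fun i => ht.primary (e i).2
  · have : associatedPrimes R (M ⧸ N) = N.associatedPrimes := by
      ext p
      rw [aux_mem_ass_iff, Submodule.AssociatePrimes.mem_iff, Submodule.isAssociatedPrime_iff]
      simp only [SetLike.ext_iff, Submodule.mem_colon_singleton]
    rw [this, ← ht.image_radical_eq_associated_primes]
    ext p
    constructor
    · rintro ⟨i, rfl⟩
      exact ⟨_, (e i).2, rfl⟩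
    · rintro ⟨q, hq, rfl⟩
      exact ⟨e.symm ⟨q, hq⟩, by simp⟩

/-- Theorem 2.2, "only if" direction: independence over `X` implies `X` is stable under
specialization within `Ass(M/N)`, i.e. open in `Ass(M/N)`. -/
theorem indep_imp_open [IsNoetherianRing R] [Module.Finite R M]
    (N : Submodule R M) (hN : N ≠ ⊤) (X : Set (Ideal R))
    (hX : X ⊆ associatedPrimes R (M ⧸ N)) (hInd : IndepOver N X) :
    ∀ P ∈ X, ∀ P' ∈ associatedPrimes R (M ⧸ N), P' ≤ P → P' ∈ X := by
  classical
  intro p hpX p' hp' hle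
  by_contra hp'X
  obtain ⟨s, P, Q, hinj, hNQ, hprim, hrad, hrange⟩ := aux_exists N
  have hmem : ∀ i, P i ∈ associatedPrimes R (M ⧸ N) := fun i => hrange ▸ Set.mem_range_self i
  have hprime : ∀ i, (P i).IsPrime := fun i => (hmem i).1
  obtain ⟨a, rfl⟩ : p ∈ Set.range P := hrange ▸ hX hpX
  obtain ⟨b, rfl⟩ : p' ∈ Set.range P := hrange ▸ hp'
  have hpow : ∀ i, ∃ n, P i ^ n • (⊤ : Submodule R M) ≤ Q i := by
    intro i
    obtain ⟨n, hn⟩ := Ideal.exists_radical_pow_le_of_fg ((Q i).colon Set.univ)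
      (IsNoetherian.noetherian _)
    refine ⟨n, Submodule.smul_le.2 fun r hr x _ => ?_⟩
    rw [hrad] at hr
    exact Submodule.mem_colon.1 (hn hr) x trivial
  have hreg : ∀ i (r : R) (x : M), r ∉ P i → r • x ∈ Q i → x ∈ Q i := by
    intro i r x hr hx
    rw [hrad] at hr
    exact ((hprim i).mem_or_mem hx).resolve_right hr
  have hass : ∀ i, associatedPrimes R (M ⧸ Q i) = {P i} := by
    intro i
    obtain ⟨n, hn⟩ := hpow i
    have := hprime i
    exact aux_ass_eq (Q i) (P i) (hprim i).ne_top n hn (hreg i)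
  have hPD := aux_minPD N P Q hass hinj hNQ hmem
  have hNle : ∀ i, N ≤ Q i := fun i => hNQ ▸ iInf_le _ i
  have hPa := hprime a
  obtain ⟨k, hk⟩ := hpow a
  have hsub : (⨅ i ∈ {i : Fin s | P i ∈ X}, Q i) ≤ Q b := by
    intro x hx
    have hxn : ∀ n, k ≤ n → x ∈ auxSat (P a) (N ⊔ P a ^ n • (⊤ : Submodule R M)) := by
      intro n hn
      set T := auxSat (P a) (N ⊔ P a ^ n • (⊤ : Submodule R M)) with hT
      have hLT : N ⊔ P a ^ n • (⊤ : Submodule R M) ≤ T := fun y hy =>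
        ⟨1, fun h => hPa.ne_top ((Ideal.eq_top_iff_one _).2 h), by simpa using hy⟩
      have hTQ : T ≤ Q a := by
        rintro y ⟨r, hr, hy⟩
        refine hreg a r y hr ?_
        exact (sup_le (hNle a) ((Submodule.smul_mono (Ideal.pow_le_pow_right hn) le_rfl).trans hk))
          hy
      have hTass : associatedPrimes R (M ⧸ T) = {P a} := by
        refine aux_ass_eq T (P a) (fun h => (hprim a).ne_top (top_le_iff.1 (h ▸ hTQ))) n
          (le_sup_right.trans hLT) ?_
        rintro r y hr ⟨t, ht, hy⟩
        exact ⟨t * r, fun h => (hPa.mem_or_mem h).elim ht hr, by rwa [mul_smul]⟩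
      have hPD' : IsMinPD N P (Function.update Q a T) := by
        refine aux_minPD N P _ ?_ hinj ?_ hmem
        · intro i
          by_cases hi : i = a
          · subst hi; rw [Function.update_self]; exact hTass
          · rw [Function.update_of_ne hi]; exact hass i
        · apply le_antisymm
          · refine le_iInf fun i => ?_
            by_cases hi : i = a
            · subst hi; rw [Function.update_self]; exact le_sup_left.trans hLT
            · rw [Function.update_of_ne hi]; exact hNle i
          · conv_rhs => rw [hNQ]
            refine iInf_mono fun i => ?_
            by_cases hi : i = a
            · subst hi; rw [Function.update_self]; exact hTQ
            · rw [Function.update_of_ne hi]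
      rw [hInd s P Q _ hPD hPD'] at hx
      have := (iInf₂_le a hpX : (⨅ i ∈ {i : Fin s | P i ∈ X}, Function.update Q a T i) ≤ _) hx
      rwa [Function.update_self] at this
    obtain ⟨r, hr, hrx⟩ := aux_krull N (P a) x k hxn
    exact hreg b r x (fun h => hr (hle h)) (hNle b hrx)
  refine hPD.2.2.2 b (le_antisymm (le_iInf₂ fun j _ => hNle j) ?_)
  conv_rhs => rw [hNQ]
  refine le_iInf fun i => ?_
  by_cases hi : i = b
  · subst hi
    refine le_trans (le_iInf₂ fun j hj => iInf₂_le j ?_) hsub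
    simp only [Set.mem_compl_iff, Set.mem_singleton_iff]
    rintro rfl
    exact hp'X hj
  · exact iInf₂_le i (by simpa using hi)
end

section
/- Let R be a Noetherian ring, M a finitely generated R-module, N ⊊ M a submodule, and P ∈ Ass(M/N). Then for all sufficiently large n, the submodule ker(M → (M/(P^n M + N))_P) is a P-primary component of N in M; in particular, for n large the submodule Q_n := ker(M → (M/(P^n M + N))_P) is P-primary and contains N, and N equals the intersection over all P ∈ Ass(M/N) of such Q_n's. -/
open Submodule

variable {R M : Type*} [CommRing R] [AddCommGroup M] [Module R M]

/-- The kernel of `M → (M/L)_P`, for `P` a prime ideal. -/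
noncomputable def locKer (P : Ideal R) (hP : P.IsPrime) (L : Submodule R M) :
    Submodule R M :=
  letI := hP
  LinearMap.ker ((LocalizedModule.mkLinearMap P.primeCompl (M ⧸ L)).comp L.mkQ)

theorem mem_locKer_iff (P : Ideal R) (hP : P.IsPrime) (L : Submodule R M) (x : M) :
    x ∈ locKer P hP L ↔ ∃ s, s ∉ P ∧ s • x ∈ L := by
  unfold locKer
  rw [LinearMap.mem_ker, LinearMap.comp_apply, IsLocalizedModule.eq_zero_iff P.primeCompl]
  constructor
  · rintro ⟨⟨s, hs⟩, h⟩
    refine ⟨s, hs, ?_⟩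
    have h' : s • L.mkQ x = 0 := h
    rwa [← map_smul, mkQ_apply, Quotient.mk_eq_zero] at h'
  · rintro ⟨s, hs, h⟩
    refine ⟨⟨s, hs⟩, ?_⟩
    change s • L.mkQ x = 0
    rwa [← map_smul, mkQ_apply, Quotient.mk_eq_zero]

theorem mem_ass_iff [IsNoetherianRing R] (P : Ideal R) (N : Submodule R M) :
    P ∈ associatedPrimes R (M ⧸ N) ↔ P.IsPrime ∧ ∃ x : M, ∀ r, r ∈ P ↔ r • x ∈ N := by
  rw [AssociatedPrimes.mem_iff, isAssociatedPrime_iff]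
  refine and_congr_right fun _ => ?_
  rw [N.mkQ_surjective.exists]
  refine exists_congr fun x => ?_
  rw [SetLike.ext_iff]
  refine forall_congr' fun r => ?_
  rw [mem_colon_singleton, mem_bot, ← map_smul, mkQ_apply, Quotient.mk_eq_zero]

/-- Artin–Rees step. -/
theorem exists_notMem_locKer [IsNoetherianRing R] [Module.Finite R M]
    (N : Submodule R M) (P : Ideal R) (hP : P.IsPrime) :
    ∃ k : ℕ, ∀ n ≥ k, ∀ x : M, (∀ r, r ∈ P ↔ r • x ∈ N) →
      x ∉ locKer P hP ((P ^ n • ⊤ : Submodule R M) ⊔ N) := by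
  let T : Submodule R (M ⧸ N) :=
    ⨅ r ∈ P, LinearMap.ker (LinearMap.lsmul R (M ⧸ N) r)
  have hT : ∀ y, y ∈ T ↔ ∀ r ∈ P, r • y = 0 := by
    intro y
    simp [T, mem_iInf]
  have hPT : P • T = ⊥ := by
    rw [eq_bot_iff, smul_le]
    intro r hr y hy
    exact (mem_bot R).2 ((hT y).1 hy r hr)
  obtain ⟨k, hk⟩ := Ideal.exists_pow_inf_eq_pow_smul P T
  refine ⟨k + 1, fun n hn x hx hmem => ?_⟩
  obtain ⟨s, hs, h⟩ := (mem_locKer_iff P hP _ x).1 hmem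
  have h1 : N.mkQ (s • x) ∈ (P ^ n • ⊤ : Submodule R (M ⧸ N)) := by
    have h2 := mem_map_of_mem (f := N.mkQ) h
    rw [Submodule.map_sup, map_smul'', Submodule.map_top, range_mkQ, mkQ_map_self,
      sup_bot_eq] at h2
    exact h2
  have h3 : N.mkQ (s • x) ∈ T := by
    rw [hT]
    intro r hr
    rw [← map_smul, mkQ_apply, Quotient.mk_eq_zero, smul_comm]
    exact N.smul_mem s ((hx r).1 hr)
  have h4 : N.mkQ (s • x) ∈ P ^ n • (⊤ : Submodule R (M ⧸ N)) ⊓ T := ⟨h1, h3⟩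
  rw [hk n (by omega)] at h4
  have h5 : P ^ (n - k) • (P ^ k • (⊤ : Submodule R (M ⧸ N)) ⊓ T) ≤ P • T :=
    smul_mono (Ideal.pow_le_self (by omega)) inf_le_right
  have h6 := h5 h4
  rw [hPT, mem_bot, mkQ_apply, Quotient.mk_eq_zero] at h6
  exact hs ((hx s).2 h6)

theorem le_locKer (P : Ideal R) (hP : P.IsPrime) (L : Submodule R M) : L ≤ locKer P hP L :=
  fun x hx => (mem_locKer_iff P hP L x).2 ⟨1, hP.one_notMem, by simpa using hx⟩

theorem mem_locKer_of_smul {P : Ideal R} {hP : P.IsPrime} {L : Submodule R M} {s : R} {x : M}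
    (hs : s ∉ P) (h : s • x ∈ locKer P hP L) : x ∈ locKer P hP L := by
  obtain ⟨t, ht, h'⟩ := (mem_locKer_iff P hP L _).1 h
  exact (mem_locKer_iff P hP L _).2
    ⟨t * s, fun hc => (hP.mem_or_mem hc).elim ht hs, by rwa [mul_smul]⟩

theorem pow_smul_mem_locKer {P : Ideal R} {hP : P.IsPrime} {N : Submodule R M} {n : ℕ} {s : R}
    (hs : s ∈ P) (x : M) : s ^ n • x ∈ locKer P hP ((P ^ n • ⊤ : Submodule R M) ⊔ N) :=
  le_locKer _ _ _ (mem_sup_left (smul_mem_smul (Ideal.pow_mem_pow hs n) mem_top))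

theorem ass_locKer [IsNoetherianRing R] {P : Ideal R} {hP : P.IsPrime} {N : Submodule R M} {n : ℕ}
    {x : M} (hx : x ∉ locKer P hP ((P ^ n • ⊤ : Submodule R M) ⊔ N)) :
    associatedPrimes R (M ⧸ locKer P hP ((P ^ n • ⊤ : Submodule R M) ⊔ N)) = {P} := by
  set Q := locKer P hP ((P ^ n • ⊤ : Submodule R M) ⊔ N) with hQ
  have key : ∀ p ∈ associatedPrimes R (M ⧸ Q), p = P := by
    intro p hp
    obtain ⟨hp, y, hy⟩ := (mem_ass_iff p Q).1 hp
    apply le_antisymm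
    · intro r hr
      by_contra hrP
      have h1 : y ∈ Q := mem_locKer_of_smul hrP ((hy r).1 hr)
      exact hp.one_notMem ((hy 1).2 (by simpa using h1))
    · intro r hr
      exact hp.mem_of_pow_mem n ((hy _).2 (pow_smul_mem_locKer hr y))
  have : Nontrivial (M ⧸ Q) :=
    ⟨Q.mkQ x, 0, by rwa [mkQ_apply, Ne, Quotient.mk_eq_zero]⟩
  obtain ⟨p, hp⟩ := associatedPrimes.nonempty R (M ⧸ Q)
  exact Set.eq_singleton_iff_unique_mem.2 ⟨key p hp ▸ hp, key⟩

/-- For `n ≫ 0`, `ker (M → (M/(PⁿM + N))_P)` is a `P`-primary component of `N` in `M`,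
and `N` is the intersection of these over all `P ∈ Ass(M/N)`. -/
theorem locKer_isPrimaryComponent [IsNoetherianRing R] [Module.Finite R M]
    (N : Submodule R M) (hN : N ≠ ⊤) :
    ∃ n₀ : ℕ, ∀ n ≥ n₀,
      (∀ (P : Ideal R) (hP : P ∈ associatedPrimes R (M ⧸ N)),
        IsPrimaryComponent N P
          (locKer P (IsAssociatedPrime.isPrime hP) ((P ^ n • ⊤ : Submodule R M) ⊔ N))) ∧
      N = ⨅ (P : Ideal R), ⨅ (hP : P ∈ associatedPrimes R (M ⧸ N)),
            locKer P (IsAssociatedPrime.isPrime hP) ((P ^ n • ⊤ : Submodule R M) ⊔ N) := by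
  classical
  have hfin : (associatedPrimes R (M ⧸ N)).Finite := associatedPrimes.finite R (M ⧸ N)
  have hAR : ∀ P : associatedPrimes R (M ⧸ N), ∃ k : ℕ, ∀ n ≥ k, ∀ x : M,
      (∀ r, r ∈ P.1 ↔ r • x ∈ N) →
      x ∉ locKer P.1 (IsAssociatedPrime.isPrime P.2) ((P.1 ^ n • ⊤ : Submodule R M) ⊔ N) :=
    fun P => exists_notMem_locKer N P.1 (IsAssociatedPrime.isPrime P.2)
  choose k hk using hAR
  have : Fintype (associatedPrimes R (M ⧸ N)) := hfin.fintype
  refine ⟨Finset.univ.sup k, fun n hn => ?_⟩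
  have hkn : ∀ P, k P ≤ n := fun P => (Finset.le_sup (Finset.mem_univ P)).trans hn
  have hint : N = ⨅ (P : Ideal R), ⨅ (hP : P ∈ associatedPrimes R (M ⧸ N)),
      locKer P (IsAssociatedPrime.isPrime hP) ((P ^ n • ⊤ : Submodule R M) ⊔ N) := by
    apply le_antisymm
    · exact le_iInf fun P => le_iInf fun hP => le_sup_right.trans (le_locKer _ _ _)
    · set K := ⨅ (P : Ideal R), ⨅ (hP : P ∈ associatedPrimes R (M ⧸ N)),
        locKer P (IsAssociatedPrime.isPrime hP) ((P ^ n • ⊤ : Submodule R M) ⊔ N) with hK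
      intro x hx
      by_contra hxN
      let K' := K.map N.mkQ
      have : Nontrivial K' := ⟨⟨N.mkQ x, mem_map_of_mem hx⟩, 0, fun h => hxN (by
        have h0 : N.mkQ x = 0 := congrArg Subtype.val h
        rwa [mkQ_apply, Quotient.mk_eq_zero] at h0)⟩
      obtain ⟨P, hP⟩ := associatedPrimes.nonempty R K'
      have hPN : P ∈ associatedPrimes R (M ⧸ N) :=
        associatedPrimes.subset_of_injective (f := K'.subtype) K'.injective_subtype hP
      obtain ⟨_, ⟨_, y, hy, rfl⟩, h⟩ := isAssociatedPrime_iff.1 hP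
      refine hk ⟨P, hPN⟩ n (hkn _) y (fun r => ?_) ?_
      · have h7 : r ∈ P ↔ _ := SetLike.ext_iff.1 h r
        rw [mem_colon_singleton, mem_bot, Subtype.ext_iff] at h7
        change r ∈ P ↔ r • N.mkQ y = 0 at h7
        rwa [← map_smul, mkQ_apply, Quotient.mk_eq_zero] at h7
      · have hy' : y ∈ K := hy
        rw [hK] at hy'
        exact (mem_iInf _).1 ((mem_iInf _).1 hy' P) hPN
  refine ⟨fun P hP => ?_, hint⟩
  let e := Fintype.equivFin (associatedPrimes R (M ⧸ N))
  let Q : associatedPrimes R (M ⧸ N) → Submodule R M := fun P =>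
    locKer P.1 (IsAssociatedPrime.isPrime P.2) ((P.1 ^ n • ⊤ : Submodule R M) ⊔ N)
  refine ⟨_, fun i => (e.symm i).1, fun i => Q (e.symm i), e ⟨P, hP⟩,
    ⟨fun i => ?_, ?_, ?_, fun i hi => ?_⟩, by simp, by simp [Q]⟩
  · obtain ⟨_, x, hx⟩ := (mem_ass_iff _ N).1 (e.symm i).2
    exact ass_locKer (hk (e.symm i) n (hkn _) x hx)
  · exact Subtype.val_injective.comp e.symm.injective
  · rw [e.symm.iInf_comp (g := Q), iInf_subtype]
    exact hint
  · obtain ⟨hPi, x, hx⟩ := (mem_ass_iff _ N).1 (e.symm i).2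
    have ht : ∀ j, ∃ t, t ∉ (e.symm i).1 ∧ (j ≠ i → t • x ∈ Q (e.symm j)) := by
      intro j
      by_cases hji : j = i
      · exact ⟨1, hPi.one_notMem, fun h => absurd hji h⟩
      by_cases hle : (e.symm i).1 ≤ (e.symm j).1
      · have hnle : ¬ (e.symm j).1 ≤ (e.symm i).1 := fun h =>
          hji (e.symm.injective (Subtype.ext (le_antisymm h hle)))
        obtain ⟨t, htj, hti⟩ := SetLike.not_le_iff_exists.1 hnle
        exact ⟨t ^ n, fun h => hti (hPi.mem_of_pow_mem n h),
          fun _ => pow_smul_mem_locKer htj x⟩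
      · obtain ⟨s, hsi, hsj⟩ := SetLike.not_le_iff_exists.1 hle
        refine ⟨1, hPi.one_notMem, fun _ => ?_⟩
        rw [one_smul]
        exact mem_locKer_of_smul hsj
          (le_locKer _ _ _ (mem_sup_right ((hx s).1 hsi)))
    choose t ht1 ht2 using ht
    have hprod : (∏ j, t j) ∉ (e.symm i).1 := fun h => by
      obtain ⟨j, _, hj⟩ := (Ideal.IsPrime.prod_mem_iff (hp := hPi)).1 h
      exact ht1 j hj
    apply hprod
    refine (hx _).2 (hi.ge ?_)
    rw [mem_iInf]
    intro j
    rw [mem_iInf]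
    intro hj
    obtain ⟨c, hc⟩ := Finset.dvd_prod_of_mem t (Finset.mem_univ j)
    rw [hc, mul_comm, mul_smul]
    exact smul_mem _ _ (ht2 j hj)
end

section
/- Let R be a Noetherian ring, M a finitely generated R-module, J an ideal, and x₁, ..., x_t ∈ R elements regular on M such that AR(J, x_i M ⊆ M) ≤ k for each i. Then for any n₁, ..., n_t ∈ ℕ, AR(J, x₁^{n₁} ⋯ x_t^{n_t} M ⊆ M) ≤ k(n₁ + ⋯ + n_t). -/
open Submodule

variable {R M : Type*} [CommRing R] [AddCommGroup M] [Module R M]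

/-- If `y m ∈ Jⁿ M` then `m ∈ J^(n-k) M`, for all `n ≥ k`. -/
def ColonLe (M : Type*) [AddCommGroup M] [Module R M] (J : Ideal R) (y : R) (k : ℕ) : Prop :=
  ∀ n, k ≤ n → ∀ m : M, y • m ∈ J ^ n • (⊤ : Submodule R M) →
    m ∈ J ^ (n - k) • (⊤ : Submodule R M)

theorem ColonLe.mul {J : Ideal R} {y z : R} {a b : ℕ} (hy : ColonLe M J y a)
    (hz : ColonLe M J z b) : ColonLe M J (y * z) (a + b) := by
  intro n hn m hm
  rw [mul_smul] at hm
  have h := hz (n - a) (by omega) m (hy n (by omega) _ hm)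
  rwa [Nat.sub_sub] at h

theorem ColonLe.one {J : Ideal R} : ColonLe M J (1 : R) 0 := by
  intro n _ m hm
  simpa using hm

theorem ColonLe.pow {J : Ideal R} {y : R} {a : ℕ} (hy : ColonLe M J y a) (n : ℕ) :
    ColonLe M J (y ^ n) (a * n) := by
  induction n with
  | zero => simpa using ColonLe.one
  | succ n ih =>
    rw [pow_succ, Nat.mul_succ]
    exact ih.mul hy

theorem smul_range_lsmul (I : Ideal R) (y : R) :
    I • LinearMap.range (LinearMap.lsmul R M y) =
      (I • (⊤ : Submodule R M)).map (LinearMap.lsmul R M y) := by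
  rw [Submodule.map_smul'', LinearMap.range_eq_map]

theorem ColonLe.arle {J : Ideal R} {y : R} {a : ℕ} (hy : ColonLe M J y a) :
    ARle J (LinearMap.range (LinearMap.lsmul R M y)) ⊤ a := by
  rintro n hn _ ⟨hm, m, rfl⟩
  rw [smul_range_lsmul]
  exact ⟨m, hy n hn m hm, rfl⟩

theorem colonLe_of_AR_le [IsNoetherianRing R] [Module.Finite R M] {J : Ideal R} {y : R} {k : ℕ}
    (hy : Function.Injective fun m : M => y • m)
    (h : AR J (LinearMap.range (LinearMap.lsmul R M y)) ⊤ ≤ k) : ColonLe M J y k := by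
  have hne : {k | ARle J (LinearMap.range (LinearMap.lsmul R M y)) ⊤ k}.Nonempty := by
    obtain ⟨c, hc⟩ := J.exists_pow_inf_eq_pow_smul (LinearMap.range (LinearMap.lsmul R M y))
    refine ⟨c, fun n hn => ?_⟩
    rw [hc n hn]
    exact Submodule.smul_mono le_rfl inf_le_right
  have hm : ARle J (LinearMap.range (LinearMap.lsmul R M y)) ⊤
      (AR J (LinearMap.range (LinearMap.lsmul R M y)) ⊤) := Nat.sInf_mem hne
  intro n hn m hmem
  have h1 := hm n (h.trans hn) ⟨hmem, m, rfl⟩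
  rw [smul_range_lsmul] at h1
  obtain ⟨m', hm', he⟩ := h1
  have : m' = m := hy he
  subst this
  exact Submodule.smul_mono_left (Ideal.pow_le_pow_right (by omega)) hm'

/-- If `AR(J, xᵢM ⊆ M) ≤ k` for `M`-regular elements `x₁, …, x_t`, then
`AR(J, x₁^{n₁}⋯x_t^{n_t}M ⊆ M) ≤ k(n₁ + ⋯ + n_t)`. -/
theorem AR_prod_pow_le [IsNoetherianRing R] [Module.Finite R M]
    (J : Ideal R) (t : ℕ) (x : Fin t → R)
    (hx : ∀ i, Function.Injective fun m : M => x i • m) (k : ℕ)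
    (hAR : ∀ i, AR J (LinearMap.range (LinearMap.lsmul R M (x i))) ⊤ ≤ k)
    (n : Fin t → ℕ) :
    AR J (LinearMap.range (LinearMap.lsmul R M (∏ i, x i ^ n i))) ⊤ ≤ k * ∑ i, n i := by
  refine Nat.sInf_le (ColonLe.arle ?_)
  have key : ∀ s : Finset (Fin t), ColonLe M J (∏ i ∈ s, x i ^ n i) (k * ∑ i ∈ s, n i) := by
    intro s
    induction s using Finset.induction_on with
    | empty => simpa using ColonLe.one
    | insert a s ha ih =>
      rw [Finset.prod_insert ha, Finset.sum_insert ha, Nat.mul_add]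
      exact ((colonLe_of_AR_le (hx a) (hAR a)).pow (n a)).mul ih
  exact key Finset.univ
end

section
/- Let R be a Noetherian ring, M a finitely generated R-module, and I₁, ..., I_t ideals of R. Then there exists k ∈ ℕ such that for all n₁, ..., n_t ∈ ℕ and all ideals J ⊆ R: J^{k(n₁+⋯+n_t)} M ∩ (I₁^{n₁}⋯I_t^{n_t} M :_M J^∞) ⊆ I₁^{n₁}⋯I_t^{n_t} M. -/
open Submodule

variable {R M : Type*} [CommRing R] [AddCommGroup M] [Module R M]

section Principal
variable {S N : Type*} [CommRing S] [AddCommGroup N] [Module S N]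

lemma usat_step [IsNoetherianRing S] [Module.Finite S N] (J : Ideal S) (x : S) :
    ∃ k : ℕ, ∀ (c e : ℕ) (m : N), m ∈ (J ^ (c + k) • ⊤ : Submodule S N) →
      (∀ r ∈ J ^ e, ∃ v : N, x • v = r • m) →
      ∃ m' ∈ (J ^ c • ⊤ : Submodule S N), x • m' = m := by
  let X : Submodule S N := LinearMap.range (LinearMap.lsmul S N x)
  let L : ℕ →o Submodule S N :=
    { toFun := fun e => ⨅ r ∈ J ^ e, X.comap (LinearMap.lsmul S N r)
      monotone' := by
        intro a b hab
        refine le_iInf₂ fun r hr => ?_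
        exact iInf₂_le r (Ideal.pow_le_pow_right hab hr) }
  have memL : ∀ e m, m ∈ L e ↔ ∀ r ∈ J ^ e, ∃ v : N, x • v = r • m := by
    intro e m
    simp [L, X, Submodule.mem_iInf]
  obtain ⟨e0, he0⟩ := monotone_stabilizes_iff_noetherian.mpr
    (inferInstance : IsNoetherian S N) L
  have hL : ∀ e, L e ≤ L e0 := by
    intro e
    rcases le_total e e0 with h | h
    · exact L.monotone h
    · exact (he0 e h).ge
  have hJL : J ^ e0 • L e0 ≤ X := by
    rw [Submodule.smul_le]
    intro r hr m hm
    obtain ⟨v, hv⟩ := (memL e0 m).1 hm r hr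
    exact ⟨v, hv⟩
  obtain ⟨k1, hk1⟩ := J.exists_pow_inf_eq_pow_smul (L e0)
  obtain ⟨k2, hk2⟩ := J.exists_pow_inf_eq_pow_smul X
  refine ⟨e0 + k1 + k2, fun c e m hm hme => ?_⟩
  have hmL : m ∈ L e0 := hL e ((memL e m).2 hme)
  have hmX : m ∈ X := by
    apply hJL
    have h1 : m ∈ (J ^ (e0 + k1) • ⊤ : Submodule S N) ⊓ L e0 :=
      ⟨Submodule.smul_mono_left (Ideal.pow_le_pow_right (by omega)) hm, hmL⟩
    rw [hk1 _ (by omega), Nat.add_sub_cancel] at h1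
    exact Submodule.smul_mono le_rfl inf_le_right h1
  have h2 : m ∈ (J ^ (c + k2) • ⊤ : Submodule S N) ⊓ X :=
    ⟨Submodule.smul_mono_left (Ideal.pow_le_pow_right (by omega)) hm, hmX⟩
  rw [hk2 _ (by omega), Nat.add_sub_cancel] at h2
  have h3 : m ∈ J ^ c • X := Submodule.smul_mono le_rfl inf_le_right h2
  have h4 : J ^ c • X = (J ^ c • ⊤ : Submodule S N).map (LinearMap.lsmul S N x) := by
    rw [Submodule.map_smul'', Submodule.map_top]
  rw [h4] at h3
  obtain ⟨m', hm', rfl⟩ := h3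
  exact ⟨m', hm', rfl⟩

lemma usat_fixed (J : Ideal S) (X : Set S)
    (hinj : ∀ x ∈ X, ∀ u v : N, x • u = x • v → u = v) (k : ℕ)
    (hk : ∀ x ∈ X, ∀ (c e : ℕ) (m : N), m ∈ (J ^ (c + k) • ⊤ : Submodule S N) →
      (∀ r ∈ J ^ e, ∃ v : N, x • v = r • m) →
      ∃ m' ∈ (J ^ c • ⊤ : Submodule S N), x • m' = m) (e : ℕ) (s : Multiset S) :
    (∀ x ∈ s, x ∈ X) → ∀ m : N, m ∈ (J ^ (k * s.card) • ⊤ : Submodule S N) →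
      (∀ r ∈ J ^ e, ∃ v : N, s.prod • v = r • m) → ∃ v : N, s.prod • v = m := by
  induction s using Multiset.induction_on with
  | empty => intro _ m _ _; exact ⟨m, by simp⟩
  | cons x s ih =>
    intro hs m hm hme
    have hx := hs x (by simp)
    obtain ⟨m', hm', rfl⟩ := hk x hx (k * s.card) e m
      (by simpa [mul_add] using hm) (fun r hr => by
        obtain ⟨v, hv⟩ := hme r hr
        exact ⟨s.prod • v, by rw [← hv, Multiset.prod_cons, mul_smul]⟩)
    obtain ⟨v, hv⟩ := ih (fun y hy => hs y (by simp [hy])) m' hm' (fun r hr => by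
      obtain ⟨v, hv⟩ := hme r hr
      refine ⟨v, hinj x hx _ _ ?_⟩
      rw [← mul_smul, ← Multiset.prod_cons, hv, smul_comm])
    exact ⟨v, by rw [Multiset.prod_cons, mul_smul, hv]⟩

lemma usat_ass (X : Set S) (hinj : ∀ x ∈ X, ∀ u v : N, x • u = x • v → u = v)
    (P : Ideal S) (hP : P.IsPrime) (s : Multiset S) :
    (∀ x ∈ s, x ∈ X) → ∀ u : N, (∀ r, r ∈ P ↔ ∃ v : N, s.prod • v = r • u) →
      ∃ x ∈ X, ∃ u : N, ∀ r, r ∈ P ↔ ∃ v : N, x • v = r • u := by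
  induction s using Multiset.induction_on with
  | empty =>
    intro _ u hu
    exact absurd ((Ideal.eq_top_iff_one P).2 ((hu 1).2 ⟨u, by simp⟩)) hP.ne_top
  | cons x s ih =>
    intro hs u hu
    have hx := hs x (by simp)
    by_cases h : ∃ r, r ∉ P ∧ ∃ v : N, x • v = r • u
    · obtain ⟨r, hr, v, hv⟩ := h
      refine ih (fun y hy => hs y (by simp [hy])) v fun a => ?_
      have h1 : a ∈ P ↔ a * r ∈ P :=
        ⟨fun h => P.mul_mem_right _ h, fun h => (hP.mem_or_mem h).resolve_right hr⟩
      rw [h1, hu]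
      refine exists_congr fun w => ?_
      rw [mul_smul, ← hv, Multiset.prod_cons, mul_smul, smul_comm a x]
      exact ⟨fun h => hinj x hx _ _ h, fun h => by rw [h]⟩
    · push Not at h
      refine ⟨x, hx, u, fun r => ⟨fun hr => ?_, fun ⟨v, hv⟩ => ?_⟩⟩
      · obtain ⟨v, hv⟩ := (hu r).1 hr
        exact ⟨s.prod • v, by rw [← hv, Multiset.prod_cons, mul_smul]⟩
      · by_contra hr
        exact h r hr v hv

lemma usat_principal [IsNoetherianRing S] [Module.Finite S N] (X : Set S) (hX : X.Finite)
    (hinj : ∀ x ∈ X, ∀ u v : N, x • u = x • v → u = v) :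
    ∃ k : ℕ, ∀ (s : Multiset S), (∀ x ∈ s, x ∈ X) → ∀ (J : Ideal S) (e : ℕ) (m : N),
      m ∈ (J ^ (k * s.card) • ⊤ : Submodule S N) →
      (∀ r ∈ J ^ e, ∃ v : N, s.prod • v = r • m) → ∃ v : N, s.prod • v = m := by
  classical
  let Q : S → Submodule S N := fun x => LinearMap.range (LinearMap.lsmul S N x)
  let A : Set (Ideal S) := ⋃ x ∈ X, associatedPrimes S (N ⧸ Q x)
  have hA : A.Finite := hX.biUnion fun x _ => associatedPrimes.finite S (N ⧸ Q x)
  choose f hf using fun (J : Ideal S) (x : S) => usat_step (N := N) J x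
  let k := ∑ J ∈ hA.toFinset, ∑ x ∈ hX.toFinset, f J x
  have hfk : ∀ J ∈ A, ∀ x ∈ X, f J x ≤ k := by
    intro J hJ x hx
    refine le_trans ?_ (Finset.single_le_sum (f := fun J => ∑ x ∈ hX.toFinset, f J x)
      (fun _ _ => Nat.zero_le _) (hA.mem_toFinset.2 hJ))
    exact Finset.single_le_sum (f := fun x => f J x)
      (fun _ _ => Nat.zero_le _) (hX.mem_toFinset.2 hx)
  refine ⟨k, fun s hs J e m hm hme => ?_⟩
  by_contra hcon
  let K : Submodule S N := LinearMap.range (LinearMap.lsmul S N s.prod)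
  have hK : ∀ y : N, y ∈ K ↔ ∃ v : N, s.prod • v = y := fun y => Iff.rfl
  -- choose an associated prime of the submodule generated by `m` modulo `K`
  let V : Submodule S (N ⧸ K) := Submodule.span S {K.mkQ m}
  have hne : (⟨K.mkQ m, Submodule.mem_span_singleton_self _⟩ : V) ≠ 0 := by
    intro h
    have h' : K.mkQ m = 0 := congrArg Subtype.val h
    rw [Submodule.mkQ_apply, Submodule.Quotient.mk_eq_zero] at h'
    exact hcon h'
  obtain ⟨P, hPass, -⟩ := exists_le_isAssociatedPrime_of_isNoetherianRing S _ hne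
  rw [isAssociatedPrime_iff] at hPass
  obtain ⟨hP, ⟨y, hy⟩, hPy⟩ := hPass
  obtain ⟨a, rfl⟩ := Submodule.mem_span_singleton.1 hy
  have hPu : ∀ r, r ∈ P ↔ ∃ v : N, s.prod • v = r • (a • m) := by
    intro r
    rw [← hK, ← Submodule.Quotient.mk_eq_zero K, hPy, Submodule.mem_colon_singleton,
      Submodule.mem_bot, ← Subtype.val_inj]
    rfl
  have hJP : J ≤ P := by
    intro r hr
    refine hP.mem_of_pow_mem e ((hPu _).2 ?_)
    obtain ⟨v, hv⟩ := hme _ (Ideal.pow_mem_pow hr e)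
    exact ⟨a • v, by rw [smul_comm, hv, smul_comm]⟩
  have hPA : P ∈ A := by
    obtain ⟨x, hx, u, hu⟩ := usat_ass X hinj P hP s hs (a • m) hPu
    refine Set.mem_biUnion hx ?_
    rw [AssociatedPrimes.mem_iff, isAssociatedPrime_iff]
    refine ⟨hP, (Q x).mkQ u, ?_⟩
    ext r
    rw [hu, Submodule.mem_colon_singleton, Submodule.mem_bot, ← map_smul, Submodule.mkQ_apply,
      Submodule.Quotient.mk_eq_zero]
    rfl
  obtain ⟨v, hv⟩ := usat_fixed P X hinj k (fun x hx c e m hm h => by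
      refine hf P x c e m ?_ h
      exact Submodule.smul_mono_left
        (Ideal.pow_le_pow_right (Nat.add_le_add_left (hfk P hPA x hx) c)) hm) 1 s hs (a • m)
      (Submodule.smul_mem _ _ (Submodule.smul_mono_left (Ideal.pow_right_mono hJP _) hm))
      (fun r hr => (hPu r).1 (by simpa using hr))
  exact hP.ne_top ((Ideal.eq_top_iff_one P).2 ((hPu 1).2 ⟨v, by rw [hv, one_smul]⟩))

end Principal

section Rees
open TensorProduct
variable {A N : Type*} [CommRing A] [AddCommGroup N] [Module A N] {t : ℕ}

/-- The multi-Laurent polynomial ring in `t` variables. -/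
abbrev MLaur (A : Type*) [CommRing A] (t : ℕ) := AddMonoidAlgebra A (Fin t → ℤ)

/-- The coefficient of `T ^ d`. -/
noncomputable def mcf (A N : Type*) [CommRing A] [AddCommGroup N] [Module A N] {t : ℕ}
    (d : Fin t → ℤ) : MLaur A t ⊗[A] N →ₗ[A] N :=
  (TensorProduct.lid A N).toLinearMap ∘ₗ LinearMap.rTensor N
    (Finsupp.lapply d ∘ₗ (AddMonoidAlgebra.coeffLinearEquiv A).toLinearMap)

lemma mcf_tmul (d : Fin t → ℤ) (p : MLaur A t) (m : N) :
    mcf A N d (p ⊗ₜ m) = p.coeff d • m := by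
  simp [mcf]

lemma mcf_single_smul (d g : Fin t → ℤ) (r : A) (f : MLaur A t ⊗[A] N) :
    mcf A N d ((AddMonoidAlgebra.single g r : MLaur A t) • f) = r • mcf A N (-g + d) f := by
  induction f using TensorProduct.induction_on with
  | zero => simp
  | tmul p m =>
    rw [TensorProduct.smul_tmul', smul_eq_mul, mcf_tmul, mcf_tmul,
      AddMonoidAlgebra.coeff_single_mul_apply, mul_smul]
  | add u v hu hv => rw [smul_add, map_add, map_add, hu, hv, smul_add]

/-- `I ^ d` for integral multi-exponents. -/
noncomputable def idl (I : Fin t → Ideal A) (d : Fin t → ℤ) : Ideal A :=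
  ∏ i, I i ^ (d i).toNat

lemma idl_down (I : Fin t → Ideal A) (d : Fin t → ℤ) (i : Fin t) :
    idl I (Pi.single i 1 + d) ≤ idl I d := by
  unfold idl
  rw [← Finset.mul_prod_erase _ _ (Finset.mem_univ i),
    ← Finset.mul_prod_erase (a := i) Finset.univ (fun j => I j ^ (d j).toNat) (Finset.mem_univ i)]
  refine Ideal.mul_mono (Ideal.pow_le_pow_right (by simp <;> omega)) (le_of_eq ?_)
  refine Finset.prod_congr rfl fun j hj => ?_
  rw [Pi.add_apply, Pi.single_eq_of_ne (Finset.ne_of_mem_erase hj), zero_add]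

lemma idl_up (I : Fin t → Ideal A) (d : Fin t → ℤ) (i : Fin t) :
    I i * idl I (-Pi.single i 1 + d) ≤ idl I d := by
  unfold idl
  rw [← Finset.mul_prod_erase _ _ (Finset.mem_univ i),
    ← Finset.mul_prod_erase (a := i) Finset.univ (fun j => I j ^ (d j).toNat) (Finset.mem_univ i),
    ← mul_assoc, ← pow_succ']
  refine Ideal.mul_mono (Ideal.pow_le_pow_right (by simp <;> omega)) (le_of_eq ?_)
  refine Finset.prod_congr rfl fun j hj => ?_
  rw [Pi.add_apply, Pi.neg_apply, Pi.single_eq_of_ne (Finset.ne_of_mem_erase hj), neg_zero,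
    zero_add]

/-- Algebra generators of the extended multi-Rees ring. -/
def rgens (G : Fin t → Finset A) : Set (MLaur A t) :=
  Set.range (fun i : Fin t => AddMonoidAlgebra.single (-Pi.single i 1) 1) ∪
    ⋃ i : Fin t, (fun a => AddMonoidAlgebra.single (Pi.single i 1) a) '' (G i : Set A)

lemma rgens_finite (G : Fin t → Finset A) : (rgens G).Finite :=
  (Set.finite_range _).union (Set.finite_iUnion fun i => (G i).finite_toSet.image _)

/-- The extended multi-Rees ring. -/
noncomputable def rees (G : Fin t → Finset A) : Subalgebra A (MLaur A t) :=
  Algebra.adjoin A (rgens G)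

lemma rees_noeth [IsNoetherianRing A] (G : Fin t → Finset A) : IsNoetherianRing (rees G) := by
  apply isNoetherianRing_of_fg
  exact Subalgebra.fg_def.2 ⟨rgens G, rgens_finite G, rfl⟩

lemma rees_smul_coeff (I : Fin t → Ideal A) (G : Fin t → Finset A)
    (hG : ∀ i, Submodule.span A (G i : Set A) = I i) (s : MLaur A t) (hs : s ∈ rees G) :
    ∀ f : MLaur A t ⊗[A] N, (∀ d, mcf A N d f ∈ idl I d • (⊤ : Submodule A N)) →
      ∀ d, mcf A N d (s • f) ∈ idl I d • (⊤ : Submodule A N) := by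
  induction hs using Algebra.adjoin_induction with
  | mem x hx =>
    intro f hf d
    rcases hx with ⟨i, rfl⟩ | hx
    · simp only
      rw [mcf_single_smul, one_smul, neg_neg]
      exact Submodule.smul_mono_left (idl_down I d i) (hf _)
    · obtain ⟨i, a, ha, rfl⟩ := Set.mem_iUnion.1 hx
      simp only
      rw [mcf_single_smul]
      apply Submodule.smul_mono_left (idl_up I d i)
      rw [← smul_eq_mul, Submodule.smul_assoc]
      refine Submodule.smul_mem_smul ?_ (hf _)
      rw [← hG i]
      exact Submodule.subset_span ha
  | algebraMap r =>
    intro f hf d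
    rw [algebraMap_smul, map_smul]
    exact Submodule.smul_mem _ _ (hf d)
  | add x y _ _ hx hy =>
    intro f hf d
    rw [add_smul, map_add]
    exact Submodule.add_mem _ (hx f hf d) (hy f hf d)
  | mul x y _ _ hx hy =>
    intro f hf d
    rw [mul_smul]
    exact hx _ (hy f hf) d

lemma rees_single (I : Fin t → Ideal A) (G : Fin t → Finset A)
    (hG : ∀ i, Submodule.span A (G i : Set A) = I i) (n : Fin t → ℕ) (a : A)
    (ha : a ∈ ∏ i, I i ^ n i) :
    (AddMonoidAlgebra.single (fun i => (n i : ℤ)) a : MLaur A t) ∈ rees G := by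
  let C : (Fin t → ℤ) → Submodule A A := fun g =>
    { carrier := {a | (AddMonoidAlgebra.single g a : MLaur A t) ∈ rees G}
      add_mem' := by
        intro a b ha hb
        simp only [Set.mem_ofPred_eq] at *
        rw [AddMonoidAlgebra.single_add]
        exact add_mem ha hb
      zero_mem' := by simp
      smul_mem' := by
        intro r a ha
        simp only [Set.mem_ofPred_eq] at *
        rw [← AddMonoidAlgebra.smul_single]
        exact Subalgebra.smul_mem _ ha r }
  have hC0 : (1 : Ideal A) ≤ C 0 := by
    intro a _
    exact (rees G).algebraMap_mem a
  have hCm : ∀ (g h : Fin t → ℤ) (K L : Ideal A), K ≤ C g → L ≤ C h → K * L ≤ C (g + h) := by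
    intro g h K L hK hL
    rw [Ideal.mul_le]
    intro a ha b hb
    have ha' : (AddMonoidAlgebra.single g a : MLaur A t) ∈ rees G := hK ha
    have hb' : (AddMonoidAlgebra.single h b : MLaur A t) ∈ rees G := hL hb
    have := mul_mem ha' hb'
    rwa [AddMonoidAlgebra.single_mul_single] at this
  have hC1 : ∀ i, I i ≤ C (Pi.single i 1) := by
    intro i
    rw [← hG i, Submodule.span_le]
    intro a ha
    exact Algebra.subset_adjoin (Or.inr (Set.mem_iUnion.2 ⟨i, a, ha, rfl⟩))
  have hCp : ∀ i (k : ℕ), I i ^ k ≤ C (k • Pi.single i 1) := by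
    intro i k
    induction k with
    | zero => simpa using hC0
    | succ k ih =>
      rw [pow_succ, succ_nsmul]
      exact hCm _ _ _ _ ih (hC1 i)
  have hCs : ∀ s : Finset (Fin t), ∏ i ∈ s, I i ^ n i ≤ C (∑ i ∈ s, n i • Pi.single i 1) := by
    classical
    intro s
    induction s using Finset.induction_on with
    | empty => simpa using hC0
    | insert i s hi ih =>
      rw [Finset.prod_insert hi, Finset.sum_insert hi]
      exact hCm _ _ _ _ (hCp i _) ih
  have hn : (∑ i, n i • (Pi.single i 1 : Fin t → ℤ)) = fun i => (n i : ℤ) := by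
    ext j
    simp [Finset.sum_apply, Pi.single_apply]
  have := hCs Finset.univ ha
  rwa [hn] at this

/-- The extended multi-Rees module. -/
noncomputable def reesM (N : Type*) [AddCommGroup N] [Module A N] (G : Fin t → Finset A) :
    Submodule (rees G) (MLaur A t ⊗[A] N) :=
  Submodule.span (rees G) (Set.range fun m : N => (1 : MLaur A t) ⊗ₜ[A] m)

lemma rees_smul_def (G : Fin t → Finset A) (s : rees G) (f : MLaur A t ⊗[A] N) :
    s • f = (s : MLaur A t) • f := rfl

lemma rees_algebraMap_smul (G : Fin t → Finset A) (r : A) (f : MLaur A t ⊗[A] N) :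
    algebraMap A (rees G) r • f = r • f := by
  rw [rees_smul_def]
  exact algebraMap_smul (MLaur A t) r f

lemma reesM_fg [Module.Finite A N] (G : Fin t → Finset A) :
    Module.Finite (rees G) (reesM N G) := by
  obtain ⟨B, hB⟩ := Module.Finite.fg_top (R := A) (M := N)
  rw [Module.Finite.iff_fg]
  refine Submodule.fg_def.2 ⟨(fun m : N => (1 : MLaur A t) ⊗ₜ[A] m) '' (B : Set N),
    B.finite_toSet.image _, le_antisymm (Submodule.span_mono (Set.image_subset_range _ _)) ?_⟩
  refine Submodule.span_le.2 ?_
  rintro _ ⟨m, rfl⟩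
  have hm : m ∈ Submodule.span A (B : Set N) := hB ▸ Submodule.mem_top
  simp only
  induction hm using Submodule.span_induction with
  | mem x hx => exact Submodule.subset_span ⟨x, hx, rfl⟩
  | zero => simp
  | add x y _ _ hx hy => rw [TensorProduct.tmul_add]; exact add_mem hx hy
  | smul r x _ hx =>
    rw [TensorProduct.tmul_smul, ← rees_algebraMap_smul G]
    exact Submodule.smul_mem _ _ hx

lemma reesM_coeff (I : Fin t → Ideal A) (G : Fin t → Finset A)
    (hG : ∀ i, Submodule.span A (G i : Set A) = I i) (f : MLaur A t ⊗[A] N)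
    (hf : f ∈ reesM N G) : ∀ d, mcf A N d f ∈ idl I d • (⊤ : Submodule A N) := by
  induction hf using Submodule.span_induction with
  | mem x hx =>
    obtain ⟨m, rfl⟩ := hx
    intro d
    simp only
    rw [mcf_tmul, AddMonoidAlgebra.one_def, AddMonoidAlgebra.coeff_single]
    by_cases hd : d = 0
    · subst hd
      simp [idl, ← Ideal.one_eq_top]
    · rw [Finsupp.single_eq_of_ne hd, zero_smul]
      exact zero_mem _
  | zero => simp
  | add x y _ _ hx hy => intro d; rw [map_add]; exact add_mem (hx d) (hy d)
  | smul r x _ hx => exact rees_smul_coeff I G hG r r.2 x hx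

lemma mem_sat_exists (J : Ideal A) (K : Submodule A N) (m : N) (hm : m ∈ sat J K) :
    ∃ e : ℕ, ∀ r ∈ J ^ e, r • m ∈ K := by
  unfold sat at hm
  rw [Submodule.mem_iSup_of_directed] at hm
  · obtain ⟨e, he⟩ := hm
    refine ⟨e, ?_⟩
    simpa [Submodule.mem_iInf] using he
  · apply Monotone.directed_le
    intro a b hab
    refine le_iInf₂ fun r hr => ?_
    exact iInf₂_le r (Ideal.pow_le_pow_right hab hr)

theorem usat_main [IsNoetherianRing A] [Module.Finite A N] (I : Fin t → Ideal A) :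
    ∃ k : ℕ, ∀ (n : Fin t → ℕ) (J : Ideal A),
      (J ^ (k * ∑ i, n i) • ⊤ : Submodule A N) ⊓ sat J ((∏ i, I i ^ n i) • ⊤) ≤
        (∏ i, I i ^ n i) • (⊤ : Submodule A N) := by
  have hG' : ∀ i, ∃ G : Finset A, Submodule.span A (G : Set A) = I i := fun i =>
    IsNoetherian.noetherian (I i)
  choose G hG using hG'
  have := rees_noeth G
  have : Module.Finite (rees G) (reesM N G) := reesM_fg G
  let x : Fin t → rees G := fun i => ⟨AddMonoidAlgebra.single (-Pi.single i 1) 1,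
    Algebra.subset_adjoin (Or.inl ⟨i, rfl⟩)⟩
  have hxp : ∀ n : Fin t → ℕ, ((∏ i, x i ^ n i : rees G) : MLaur A t) =
      AddMonoidAlgebra.single (-fun i => (n i : ℤ)) 1 := by
    intro n
    push_cast
    simp only [x, AddMonoidAlgebra.single_pow, one_pow, AddMonoidAlgebra.prod_single,
      Finset.prod_const_one]
    congr 1
    ext j
    simp [Finset.sum_apply, Pi.single_apply]
  let ι : N → reesM N G := fun m => ⟨(1 : MLaur A t) ⊗ₜ[A] m, Submodule.subset_span ⟨m, rfl⟩⟩
  have hιa : ∀ u v, ι (u + v) = ι u + ι v := fun u v => Subtype.ext (TensorProduct.tmul_add _ _ _)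
  have hιs : ∀ (r : A) u, ι (r • u) = algebraMap A (rees G) r • ι u := by
    intro r u
    apply Subtype.ext
    rw [Submodule.coe_smul, rees_algebraMap_smul]
    exact TensorProduct.tmul_smul _ _ _
  have hι0 : ι 0 = 0 := Subtype.ext (TensorProduct.tmul_zero _ _)
  obtain ⟨k, hk⟩ := usat_principal (S := rees G) (N := reesM N G) (Set.range x)
    (Set.finite_range x) (by
      rintro _ ⟨i, rfl⟩ u v huv
      apply Subtype.ext
      have h1 : (AddMonoidAlgebra.single (-Pi.single i 1) 1 : MLaur A t) • u.1 =
          (AddMonoidAlgebra.single (-Pi.single i 1) 1 : MLaur A t) • v.1 :=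
        congrArg Subtype.val huv
      have h2 := congrArg (fun f => (AddMonoidAlgebra.single (Pi.single i 1) 1 : MLaur A t) • f) h1
      simpa only [← mul_smul, AddMonoidAlgebra.single_mul_single, add_neg_cancel, mul_one,
        ← AddMonoidAlgebra.one_def, one_smul] using h2)
  refine ⟨k, fun n J m hm => ?_⟩
  obtain ⟨hm1, hm2⟩ := hm
  obtain ⟨e, he⟩ := mem_sat_exists _ _ _ hm2
  let s : Multiset (rees G) := ∑ i, n i • {x i}
  have hsp : s.prod = ∏ i, x i ^ n i := by
    simp [s, Multiset.prod_sum, Multiset.prod_nsmul]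
  have hsc : s.card = ∑ i, n i := by
    simp [s]
  have hsX : ∀ y ∈ s, y ∈ Set.range x := by
    intro y hy
    obtain ⟨i, -, hi⟩ := Multiset.mem_sum.1 hy
    have := Multiset.mem_of_mem_nsmul hi
    exact ⟨i, (Multiset.mem_singleton.1 this).symm⟩
  -- elements of `I ^ n N` are divisible by `x ^ n` in the Rees module
  have hdiv : ∀ y ∈ (∏ i, I i ^ n i) • (⊤ : Submodule A N),
      ∃ v : reesM N G, s.prod • v = ι y := by
    intro y hy
    refine Submodule.smul_induction_on (p := fun y => ∃ v : reesM N G, s.prod • v = ι y) hy ?_ ?_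
    · intro a ha z _
      refine ⟨(⟨_, rees_single I G hG n a ha⟩ : rees G) • ι z, ?_⟩
      rw [← mul_smul, hιs]
      congr 1
      apply Subtype.ext
      rw [hsp, MulMemClass.coe_mul, hxp, AddMonoidAlgebra.single_mul_single, neg_add_cancel,
        one_mul]
      rfl
    · intro y z hy hz
      obtain ⟨v, hv⟩ := hy
      obtain ⟨w, hw⟩ := hz
      exact ⟨v + w, by rw [smul_add, hv, hw, hιa]⟩
  obtain ⟨v, hv⟩ := hk s hsX (J.map (algebraMap A (rees G))) e (ι m) (by
      rw [hsc, ← Ideal.map_pow]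
      refine Submodule.smul_induction_on (p := fun y => ι y ∈
        (Ideal.map (algebraMap A (rees G)) (J ^ (k * ∑ i, n i)) • ⊤ :
          Submodule (rees G) (reesM N G))) hm1 ?_ ?_
      · intro a ha z _
        rw [hιs]
        exact Submodule.smul_mem_smul (Ideal.mem_map_of_mem _ ha) Submodule.mem_top
      · intro y z hy hz
        rw [hιa]
        exact add_mem hy hz) (by
      rw [← Ideal.map_pow]
      let K : Ideal (rees G) := (LinearMap.range (LinearMap.lsmul (rees G) (reesM N G) s.prod)).comap
        (LinearMap.toSpanSingleton (rees G) (reesM N G) (ι m))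
      have hle : (J ^ e).map (algebraMap A (rees G)) ≤ K := by
        rw [Ideal.map_le_iff_le_comap]
        intro r hr
        obtain ⟨v, hv⟩ := hdiv _ (he r hr)
        exact ⟨v, by rw [hιs] at hv; exact hv⟩
      intro r hr
      obtain ⟨v, hv⟩ := hle hr
      exact ⟨v, hv⟩)
  have h1 : (AddMonoidAlgebra.single (-fun i => (n i : ℤ)) 1 : MLaur A t) • v.1 =
      (1 : MLaur A t) ⊗ₜ[A] m := by
    rw [← hxp, ← hsp]
    exact congrArg Subtype.val hv
  have h2 := congrArg (mcf A N 0) h1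
  rw [mcf_single_smul, mcf_tmul, one_smul, neg_neg, add_zero, AddMonoidAlgebra.one_def,
    AddMonoidAlgebra.coeff_single, Finsupp.single_eq_same, one_smul] at h2
  have h3 := reesM_coeff I G hG v.1 v.2 (fun i => (n i : ℤ))
  rw [h2] at h3
  simpa [idl] using h3

end Rees

/-- Theorem 3.3: there is `k` such that for all exponents `n` and all ideals `J`,
`J^{k|n|} M ⊓ (I₁^{n₁}⋯I_t^{n_t} M :_M J^∞) ⊆ I₁^{n₁}⋯I_t^{n_t} M`. -/
theorem uniform_AR_saturation [IsNoetherianRing R] [Module.Finite R M]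
    (t : ℕ) (I : Fin t → Ideal R) :
    ∃ k : ℕ, ∀ (n : Fin t → ℕ) (J : Ideal R),
      (J ^ (k * ∑ i, n i) • ⊤ : Submodule R M) ⊓ sat J ((∏ i, I i ^ n i) • ⊤) ≤
        (∏ i, I i ^ n i) • (⊤ : Submodule R M) := by
  exact usat_main I
end

section
/- Let R be a Noetherian ring, M a finitely generated R-module, and I₁, ..., I_t ideals. Then there exists k ∈ ℕ such that for every n = (n₁,...,n_t) ∈ ℕ^t there exists an irredundant minimal primary decomposition I₁^{n₁}⋯I_t^{n_t} M = Q₁ ∩ ... ∩ Q_r where each Q_i is P_i-primary and P_i^{k(n₁+⋯+n_t)} M ⊆ Q_i for all i. -/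
open Submodule

variable {R M : Type*} [CommRing R] [AddCommGroup M] [Module R M]

theorem lg_induct {t : ℕ} {p : (Fin t → ℕ) → Prop} (h0 : p 0)
    (hs : ∀ n i, p n → p (n + Pi.single i 1)) (n : Fin t → ℕ) : p n := by
  induction hm : ∑ i, n i generalizing n with
  | zero =>
    have : n = 0 := by
      funext i
      exact (Finset.sum_eq_zero_iff.mp hm) i (Finset.mem_univ i)
    exact this ▸ h0
  | succ m ih =>
    have : ∃ i, n i ≠ 0 := by
      by_contra! h
      simp [h] at hm
    obtain ⟨i, hi⟩ := this
    have hn : n = (n - Pi.single i 1) + Pi.single i 1 := by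
      funext j
      by_cases hj : j = i
      · subst hj; simp; omega
      · simp [hj]
    rw [hn]
    apply hs
    apply ih
    have := congrArg (fun f => ∑ i, f i) hn
    simp only [Pi.add_apply, Finset.sum_add_distrib, Finset.sum_pi_single',
      Finset.mem_univ, if_true] at this
    have h1 : ∑ j, (Pi.single i 1 : Fin t → ℕ) j = 1 := by simp
    omega

theorem lg_prod_add {A : Type*} [CommMonoid A] {t : ℕ} (u : Fin t → A) (n : Fin t → ℕ) (i : Fin t) :
    ∏ j, u j ^ ((n + Pi.single i 1 : Fin t → ℕ) j) = u i * ∏ j, u j ^ n j := by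
  simp only [Pi.add_apply, pow_add, Finset.prod_mul_distrib]
  rw [mul_comm]
  congr 1
  rw [Finset.prod_eq_single i]
  · simp
  · intro j _ hj; simp [hj]
  · simp

theorem lg_sum_add {t : ℕ} (n : Fin t → ℕ) (i : Fin t) :
    ∑ j, ((n + Pi.single i 1 : Fin t → ℕ) j) = ∑ j, n j + 1 := by
  simp [Finset.sum_add_distrib]

/-- Core uniform Artin–Rees statement. -/
theorem lg_core {S X : Type*} [CommRing S] [IsNoetherianRing S] [AddCommGroup X] [Module S X]
    [Module.Finite S X] {t : ℕ} (u : Fin t → S) (hu : ∀ i (z : X), u i • z = 0 → z = 0)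
    (J : Ideal S) : ∃ k0 : ℕ, ∀ k ≥ k0, ∀ (n : Fin t → ℕ) (y : X),
      y ∈ (J ^ (k * ∑ j, n j) • ⊤ : Submodule S X) →
      (∀ j ∈ J, ∃ z : X, (∏ i, u i ^ n i) • z = j • y) → ∃ z : X, (∏ i, u i ^ n i) • z = y := by
  have h1 : ∀ i, ∃ a : ℕ, ∀ y ∈ (J ^ (a + 1) • ⊤ : Submodule S X),
      (∀ j ∈ J, ∃ z : X, u i • z = j • y) → ∃ z : X, u i • z = y := by
    intro i
    let U : Submodule S X := LinearMap.range (LinearMap.lsmul S X (u i))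
    let N : Submodule S X := ⨅ j : J, U.comap (LinearMap.lsmul S X (j : S))
    obtain ⟨a, ha⟩ := J.exists_pow_inf_eq_pow_smul N
    refine ⟨a, fun y hy hj => ?_⟩
    have hyN : y ∈ N := by
      simp only [N, Submodule.mem_iInf, Submodule.mem_comap]
      intro j
      obtain ⟨z, hz⟩ := hj j j.2
      exact ⟨z, hz⟩
    have h2 := ha (a + 1) (by omega)
    have h3 : y ∈ J ^ (a + 1 - a) • (J ^ a • ⊤ ⊓ N) := h2 ▸ ⟨hy, hyN⟩
    have h4 : J ^ (a + 1 - a) • (J ^ a • ⊤ ⊓ N) ≤ U := by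
      rw [Nat.add_sub_cancel_left, pow_one, Submodule.smul_le]
      intro r hr x hx
      have := (Submodule.mem_inf.1 hx).2
      simp only [N, Submodule.mem_iInf, Submodule.mem_comap] at this
      exact this ⟨r, hr⟩
    exact h4 h3
  have h2 : ∀ i, ∃ b : ℕ, ∀ m ≥ b, ∀ z : X, u i • z ∈ (J ^ m • ⊤ : Submodule S X) →
      z ∈ (J ^ (m - b) • ⊤ : Submodule S X) := by
    intro i
    let U : Submodule S X := LinearMap.range (LinearMap.lsmul S X (u i))
    obtain ⟨b, hb⟩ := J.exists_pow_inf_eq_pow_smul U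
    refine ⟨b, fun m hm z hz => ?_⟩
    have h3 : u i • z ∈ J ^ (m - b) • (J ^ b • ⊤ ⊓ U) := hb m hm ▸ ⟨hz, ⟨z, rfl⟩⟩
    have h4 : J ^ (m - b) • (J ^ b • ⊤ ⊓ U) ≤
        (J ^ (m - b) • ⊤ : Submodule S X).map (LinearMap.lsmul S X (u i)) := by
      rw [Submodule.map_smul'', Submodule.map_top]
      exact Submodule.smul_mono le_rfl inf_le_right
    obtain ⟨w, hw, hwz⟩ := h4 h3
    have : w = z := by
      rw [← sub_eq_zero]
      apply hu i
      rw [smul_sub, sub_eq_zero]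
      exact hwz
    exact this ▸ hw
  choose a ha using h1
  choose b hb using h2
  refine ⟨∑ i, (a i + 1) + ∑ i, b i, fun k hk n => ?_⟩
  have hak : ∀ i, a i + 1 ≤ k := fun i => by
    have := Finset.single_le_sum (f := fun i => a i + 1) (fun _ _ => Nat.zero_le _)
      (Finset.mem_univ i)
    omega
  have hbk : ∀ i, b i ≤ k := fun i => by
    have := Finset.single_le_sum (f := b) (fun _ _ => Nat.zero_le _) (Finset.mem_univ i)
    omega
  induction n using lg_induct with
  | h0 => intro y _ _; exact ⟨y, by simp⟩
  | hs n i ih =>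
    intro y hy hj
    rw [lg_sum_add] at hy
    simp only [lg_prod_add, mul_smul] at hj ⊢
    have h5 : ∃ z : X, u i • z = y := by
      apply ha i y
      · refine Submodule.smul_mono_left (Ideal.pow_le_pow_right ?_) hy
        exact (hak i).trans (Nat.le_mul_of_pos_right _ (by omega))
      · intro j hjJ
        obtain ⟨z, hz⟩ := hj j hjJ
        exact ⟨_, hz⟩
    obtain ⟨y', rfl⟩ := h5
    have h6 : y' ∈ (J ^ (k * ∑ j, n j) • ⊤ : Submodule S X) := by
      have h7 := hb i _ (by nlinarith [hbk i, Nat.zero_le (k * ∑ j, n j)]) y' hy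
      refine Submodule.smul_mono_left (Ideal.pow_le_pow_right ?_) h7
      have := hbk i
      rw [Nat.mul_add]
      omega
    obtain ⟨z, hz⟩ := ih y' h6 (fun j hjJ => by
      obtain ⟨z, hz⟩ := hj j hjJ
      refine ⟨z, ?_⟩
      rw [← sub_eq_zero]
      apply hu i
      rw [smul_sub, sub_eq_zero, hz, smul_comm])
    exact ⟨z, by rw [hz]⟩

theorem lg_ass_finite {R S G : Type*} [CommRing R] [CommRing S] [IsNoetherianRing S] [Algebra R S]
    [AddCommGroup G] [Module S G] [Module.Finite S G] :
    {P : Ideal R | P.IsPrime ∧ ∃ z : G, ∀ r : R, r ∈ P ↔ algebraMap R S r • z = 0}.Finite := by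
  refine ((associatedPrimes.finite S G).image (Ideal.comap (algebraMap R S))).subset ?_
  rintro P ⟨hP, y, hy⟩
  let C : Set (Ideal S) := {K | ∃ s : S, K = (⊥ : Submodule S G).colon {s • y} ∧
    ∀ r : R, algebraMap R S r ∈ K → r ∈ P}
  have hC : C.Nonempty := ⟨_, 1, rfl, fun r hr => by
    rw [Submodule.mem_colon_singleton, one_smul, Submodule.mem_bot] at hr
    exact (hy r).2 hr⟩
  obtain ⟨K, ⟨s, hKs, hK⟩, hmax⟩ := set_has_maximal_iff_noetherian.mpr
    (inferInstance : IsNoetherian S S) C hC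
  have hmem : ∀ c : S, c ∈ K ↔ c • s • y = 0 := fun c => by
    rw [hKs, Submodule.mem_colon_singleton, Submodule.mem_bot]
  have hmul : ∀ b : S, (∀ r : R, algebraMap R S r • (b * s) • y = 0 → r ∈ P) →
      ∀ c : S, c • (b * s) • y = 0 → c ∈ K := by
    intro b hb c hc
    have h1 : (⊥ : Submodule S G).colon {(b * s) • y} ∈ C := ⟨b * s, rfl, fun r hr => by
      rw [Submodule.mem_colon_singleton, Submodule.mem_bot] at hr
      exact hb r hr⟩
    have h2 := hmax _ h1
    have h3 : K ≤ (⊥ : Submodule S G).colon {(b * s) • y} := by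
      intro d hd
      rw [Submodule.mem_colon_singleton, Submodule.mem_bot]
      rw [hmem] at hd
      rw [mul_smul, smul_comm, hd, smul_zero]
    by_contra hcK
    apply h2
    refine lt_of_le_of_ne h3 (fun h => hcK ?_)
    rw [h, Submodule.mem_colon_singleton, Submodule.mem_bot]
    exact hc
  have hKP : Ideal.comap (algebraMap R S) K = P := by
    ext r
    rw [Ideal.mem_comap]
    refine ⟨hK r, fun h => ?_⟩
    rw [hmem, smul_comm, (hy r).1 h, smul_zero]
  have hprime : Ideal.IsPrime K := by
    refine ⟨?_, ?_⟩
    · intro h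
      apply hP.ne_top
      rw [← hKP, h, Ideal.comap_top]
    · intro c b hcb
      by_cases hb : ∀ r : R, algebraMap R S r • (b * s) • y = 0 → r ∈ P
      · left
        apply hmul b hb
        rw [hmem] at hcb
        rw [← hcb]; simp only [mul_smul]
      · right
        push Not at hb
        obtain ⟨r, hr, hrP⟩ := hb
        apply hmul (algebraMap R S r)
        · intro r' hr'
          have : r' * r ∈ P := by
            apply hK
            rw [hmem, map_mul, ← hr']; simp only [mul_smul]
          exact (hP.mem_or_mem this).resolve_right hrP
        · rw [← hr]; simp only [mul_smul]; rw [smul_comm]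
  exact ⟨K, isAssociatedPrime_iff.2 ⟨hprime, s • y, hKs⟩, hKP⟩

theorem lg_descend {R S X : Type*} [CommRing R] [CommRing S] [Algebra R S]
    [AddCommGroup X] [Module S X] {t : ℕ} (u : Fin t → S)
    (hu : ∀ i (z : X), u i • z = 0 → z = 0) (P : Ideal R) (hP : P.IsPrime) (n : Fin t → ℕ) :
    ∀ y : X, (∀ r : R, r ∈ P ↔ ∃ z : X, (∏ i, u i ^ n i) • z = algebraMap R S r • y) →
    ∃ i, ∃ y : X, ∀ r : R, r ∈ P ↔ ∃ z : X, u i • z = algebraMap R S r • y := by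
  induction n using lg_induct with
  | h0 =>
    intro y hy
    exact absurd ((Ideal.eq_top_iff_one P).2 ((hy 1).2 ⟨y, by simp⟩)) hP.ne_top
  | hs n i ih =>
    intro y hy
    simp only [lg_prod_add, mul_smul] at hy
    by_cases h : ∃ r : R, r ∉ P ∧ ∃ z : X, u i • z = algebraMap R S r • y
    · obtain ⟨r, hr, z, hz⟩ := h
      apply ih z
      intro r'
      have : r' ∈ P ↔ r' * r ∈ P :=
        ⟨fun h => P.mul_mem_right _ h, fun h => (hP.mem_or_mem h).resolve_right hr⟩
      rw [this, hy]
      refine exists_congr fun w => ?_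
      rw [map_mul, mul_smul, ← hz, smul_comm _ (u i) z]
      refine ⟨fun h => ?_, fun h => by rw [h]⟩
      rw [← sub_eq_zero]
      apply hu i
      rw [smul_sub, sub_eq_zero, h]
    · refine ⟨i, y, fun r => ⟨fun hr => ?_, fun hr => ?_⟩⟩
      · obtain ⟨z, hz⟩ := (hy r).1 hr
        exact ⟨_, hz⟩
      · by_contra hrP
        exact h ⟨r, hrP, hr⟩

theorem lg_mem_ass {R M : Type*} [CommRing R] [AddCommGroup M] [Module R M]
    [IsNoetherianRing R] (N : Submodule R M) (P : Ideal R) :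
    P ∈ associatedPrimes R (M ⧸ N) ↔ P.IsPrime ∧ ∃ x : M, ∀ r : R, r ∈ P ↔ r • x ∈ N := by
  rw [AssociatedPrimes.mem_iff, isAssociatedPrime_iff]
  refine and_congr_right fun _ => ⟨?_, ?_⟩
  · rintro ⟨x, hx⟩
    obtain ⟨x, rfl⟩ := Submodule.Quotient.mk_surjective N x
    refine ⟨x, fun r => ?_⟩
    rw [hx, Submodule.mem_colon_singleton, Submodule.mem_bot, ← Submodule.Quotient.mk_smul,
      Submodule.Quotient.mk_eq_zero]
  · rintro ⟨x, hx⟩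
    refine ⟨Submodule.Quotient.mk x, ?_⟩
    ext r
    rw [hx, Submodule.mem_colon_singleton, Submodule.mem_bot, ← Submodule.Quotient.mk_smul,
      Submodule.Quotient.mk_eq_zero]

/-- The `P`-saturation of a submodule. -/
def lgSat {R M : Type*} [CommRing R] [AddCommGroup M] [Module R M]
    (P : Ideal R) (hP : P.IsPrime) (L : Submodule R M) : Submodule R M where
  carrier := {x | ∃ s, s ∉ P ∧ s • x ∈ L}
  zero_mem' := ⟨1, fun h => hP.ne_top ((Ideal.eq_top_iff_one P).2 h), by simp⟩
  add_mem' := by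
    rintro x y ⟨s, hs, hx⟩ ⟨s', hs', hy⟩
    refine ⟨s * s', fun h => (hP.mem_or_mem h).elim hs hs', ?_⟩
    rw [smul_add]
    refine L.add_mem ?_ ?_
    · rw [mul_comm, mul_smul]; exact L.smul_mem _ hx
    · rw [mul_smul]; exact L.smul_mem _ hy
  smul_mem' := by
    rintro c x ⟨s, hs, hx⟩
    exact ⟨s, hs, by rw [smul_comm]; exact L.smul_mem _ hx⟩

theorem lg_assemble {R M : Type*} [CommRing R] [AddCommGroup M] [Module R M]
    [IsNoetherianRing R] [Module.Finite R M] (N : Submodule R M) (m : ℕ)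
    (h : ∀ P ∈ associatedPrimes R (M ⧸ N), ∀ y ∈ (P ^ m • ⊤ : Submodule R M),
      (∀ r ∈ P, r • y ∈ N) → y ∈ N) :
    ∃ (r : ℕ) (P : Fin r → Ideal R) (Q : Fin r → Submodule R M),
        IsMinPD N P Q ∧ ∀ i, (P i ^ m • ⊤ : Submodule R M) ≤ Q i := by
  have hfin : Finite (associatedPrimes R (M ⧸ N)) := (associatedPrimes.finite R (M ⧸ N)).to_subtype
  let e := (Finite.equivFin (associatedPrimes R (M ⧸ N))).symm
  let P : Fin _ → Ideal R := fun i => (e i).1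
  have hPA : ∀ i, P i ∈ associatedPrimes R (M ⧸ N) := fun i => (e i).2
  have hP : ∀ i, (P i).IsPrime := fun i => ((lg_mem_ass N (P i)).1 (hPA i)).1
  let Q : Fin _ → Submodule R M := fun i => lgSat (P i) (hP i) (P i ^ m • ⊤ ⊔ N)
  have hQmem : ∀ i x, x ∈ Q i ↔ ∃ s, s ∉ P i ∧ s • x ∈ (P i ^ m • ⊤ ⊔ N : Submodule R M) :=
    fun _ _ => Iff.rfl
  have h1 : ∀ i, (1 : R) ∉ P i := fun i h => (hP i).ne_top ((Ideal.eq_top_iff_one _).2 h)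
  have hle : ∀ i, (P i ^ m • ⊤ ⊔ N : Submodule R M) ≤ Q i := fun i x hx =>
    ⟨1, h1 i, by rwa [one_smul]⟩
  have hNQ : ∀ i, N ≤ Q i := fun i => le_sup_right.trans (hle i)
  have hpow : ∀ i, ∀ s ∈ P i, ∀ x : M, s ^ m • x ∈ Q i := fun i s hs x =>
    hle i (Submodule.mem_sup_left (Submodule.smul_mem_smul (Ideal.pow_mem_pow hs m) trivial))
  have hcancel : ∀ i, ∀ s ∉ P i, ∀ x : M, s • x ∈ Q i → x ∈ Q i := by
    rintro i s hs x ⟨s', hs', hx⟩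
    exact ⟨s' * s, fun h => ((hP i).mem_or_mem h).elim hs' hs, by rwa [mul_smul]⟩
  -- key: an element whose annihilator mod `N` is `P i` is not in `Q i`
  have key : ∀ i x, (∀ r : R, r ∈ P i ↔ r • x ∈ N) → x ∉ Q i := by
    rintro i x hx ⟨s, hs, hsx⟩
    obtain ⟨y, hy, w, hw, hyw⟩ := Submodule.mem_sup.1 hsx
    have hyN : y ∈ N := by
      apply h _ (hPA i) y hy
      intro r hr
      have : y = s • x - w := by rw [← hyw]; abel
      rw [this, smul_sub, smul_comm]
      exact N.sub_mem (N.smul_mem _ ((hx r).1 hr)) (N.smul_mem _ hw)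
    exact hs ((hx s).2 (hyw ▸ N.add_mem hyN hw))
  refine ⟨_, P, Q, ⟨?_, ?_, ?_, ?_⟩, fun i => le_sup_left.trans (hle i)⟩
  · intro i
    ext P'
    rw [lg_mem_ass, Set.mem_singleton_iff]
    constructor
    · rintro ⟨hP', x, hx⟩
      apply le_antisymm
      · intro r hr
        by_contra hrP
        have := hcancel i r hrP x ((hx r).1 hr)
        exact hP'.ne_top ((Ideal.eq_top_iff_one _).2 ((hx 1).2 (by rwa [one_smul])))
      · intro r hr
        exact hP'.mem_of_pow_mem m ((hx _).2 (hpow i r hr x))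
    · rintro rfl
      obtain ⟨_, x, hx⟩ := (lg_mem_ass N (P i)).1 (hPA i)
      refine ⟨hP i, x, fun r => ⟨fun hr => hNQ i ((hx r).1 hr), fun hr => ?_⟩⟩
      by_contra hrP
      exact key i x hx (hcancel i r hrP x hr)
  · intro i j hij
    exact e.injective (Subtype.ext hij)
  · apply le_antisymm (le_iInf hNQ)
    intro z hz
    by_contra hzN
    let Z : Submodule R (M ⧸ N) := (⨅ i, Q i).map N.mkQ
    have hnt : Nontrivial Z := by
      refine ⟨⟨⟨N.mkQ z, ⟨z, hz, rfl⟩⟩, 0, fun h0 => hzN ?_⟩⟩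
      have := congrArg Subtype.val h0
      exact (Submodule.Quotient.mk_eq_zero N).1 this
    obtain ⟨p, hp⟩ := associatedPrimes.nonempty R Z
    have hpA : p ∈ associatedPrimes R (M ⧸ N) :=
      IsAssociatedPrime.map_of_injective Z.subtype hp Z.injective_subtype
    obtain ⟨_, ⟨_, x, hx, rfl⟩, hpx⟩ := isAssociatedPrime_iff.1 hp
    obtain ⟨i, hi⟩ := e.surjective ⟨p, hpA⟩
    have hPi : P i = p := congrArg Subtype.val hi
    refine key i x (fun r => ?_) ((Submodule.mem_iInf _).1 hx i)
    rw [hPi, hpx, Submodule.mem_colon_singleton, Submodule.mem_bot, ← Submodule.Quotient.mk_eq_zero N]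
    exact Subtype.ext_iff
  · intro i hN
    obtain ⟨_, x, hx⟩ := (lg_mem_ass N (P i)).1 (hPA i)
    have hs : ∀ j, j ≠ i → ∃ s, s ∉ P i ∧ s • x ∈ Q j := by
      intro j hj
      by_cases hij : P i ≤ P j
      · have : ¬ P j ≤ P i := fun hji => hj (e.injective (Subtype.ext (le_antisymm hji hij)))
        obtain ⟨s, hs, hsi⟩ := SetLike.not_le_iff_exists.1 this
        exact ⟨s ^ m, fun hh => hsi ((hP i).mem_of_pow_mem m hh), hpow j s hs x⟩
      · obtain ⟨s, hs, hsj⟩ := SetLike.not_le_iff_exists.1 hij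
        refine ⟨1, h1 i, ?_⟩
        rw [one_smul]
        exact hcancel j s hsj x (hNQ j ((hx s).1 hs))
    have hs' : ∀ j, ∃ s, s ∉ P i ∧ (j ≠ i → s • x ∈ Q j) := by
      intro j
      by_cases hj : j = i
      · exact ⟨1, h1 i, fun h => absurd hj h⟩
      · obtain ⟨s, h1, h2⟩ := hs j hj
        exact ⟨s, h1, fun _ => h2⟩
    choose s hsi hsx using hs'
    have hprod : ∏ j, s j ∉ P i := by
      intro hh
      obtain ⟨j, _, hj⟩ := ((hP i).prod_mem_iff).1 hh
      exact hsi j hj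
    apply hprod
    rw [hx]
    apply hN.ge
    simp only [Submodule.mem_iInf]
    intro j hj
    have hji : j ≠ i := fun hh => hj hh
    rw [← Finset.mul_prod_erase _ _ (Finset.mem_univ j), mul_comm, mul_smul]
    exact (Q j).smul_mem _ (hsx j hji)

universe u v

section LgModel
variable {A : Type u} {B : Type v} [CommRing A] [AddCommGroup B] [Module A B] {t : ℕ}

/-- Shift operator on multigraded families. -/
def lgT (A : Type u) (B : Type v) [CommRing A] [AddCommGroup B] [Module A B] {t : ℕ}
    (d : Fin t → ℤ) : Module.End A ((Fin t → ℤ) → B) :=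
  LinearMap.funLeft A B (fun x => x - d)

theorem lgT_apply (d : Fin t → ℤ) (f : (Fin t → ℤ) → B) (x : Fin t → ℤ) :
    lgT A B d f x = f (x - d) := rfl

theorem lgT_mul (d d' : Fin t → ℤ) : lgT A B d * lgT A B d' = lgT A B (d + d') := by
  ext f x
  simp only [Module.End.mul_apply, lgT_apply]
  congr 1
  abel

theorem lgT_zero : lgT A B (0 : Fin t → ℤ) = 1 := by
  ext f x
  simp [lgT_apply]

/-- The degree zero embedding. -/
def lgIota (A : Type u) (B : Type v) [CommRing A] [AddCommGroup B] [Module A B] (t : ℕ) :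
    B →ₗ[A] ((Fin t → ℤ) → B) := LinearMap.single A (fun _ => B) 0

theorem lgIota_zero (x : B) : lgIota A B t x 0 = x := by simp [lgIota]

theorem lg_pow_mono (I : Fin t → Ideal A) {n n' : Fin t → ℕ} (h : ∀ i, n i ≤ n' i) :
    ∏ i, I i ^ n' i ≤ ∏ i, I i ^ n i := by
  refine Finset.prod_le_prod' fun i _ => Ideal.pow_le_pow_right (h i)

theorem lg_model [IsNoetherianRing A] [Module.Finite A B] (I : Fin t → Ideal A) :
    ∃ (S : Type v) (_ : CommRing S) (_ : Algebra A S) (_ : IsNoetherianRing S)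
      (X : Type v) (_ : AddCommGroup X) (_ : Module S X) (_ : Module A X)
      (_ : IsScalarTower A S X) (_ : Module.Finite S X) (ι : B →ₗ[A] X) (w : Fin t → S),
      (∀ i, ∀ z : X, w i • z = 0 → z = 0) ∧
      ∀ (n : Fin t → ℕ) (x : B), (∃ z : X, (∏ i, w i ^ n i) • z = ι x) ↔
        x ∈ ((∏ i, I i ^ n i) • ⊤ : Submodule A B) := by
  classical
  choose g hg using fun i => (IsNoetherian.noetherian (I i) : (I i).FG)
  let e : Fin t → (Fin t → ℤ) := fun i => Pi.single i 1
  let s : Finset (Module.End A ((Fin t → ℤ) → B)) :=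
    Finset.univ.image (fun i => lgT A B (-e i)) ∪
    Finset.univ.biUnion (fun i => (g i).image fun a => a • lgT A B (e i))
  have hs : ∀ c, c ∈ s ↔ (∃ i, lgT A B (-e i) = c) ∨ ∃ i, ∃ a ∈ g i, a • lgT A B (e i) = c := by
    intro c; simp [s]
  have hs' : ∀ c ∈ s, ∃ (a : A) (d : Fin t → ℤ), c = a • lgT A B d := by
    intro c hc
    rcases (hs c).1 hc with ⟨i, rfl⟩ | ⟨i, a, _, rfl⟩
    · exact ⟨1, _, (one_smul _ _).symm⟩
    · exact ⟨a, _, rfl⟩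
  have hcomm : ∀ a ∈ (s : Set (Module.End A ((Fin t → ℤ) → B))), ∀ b ∈
      (s : Set (Module.End A ((Fin t → ℤ) → B))), a * b = b * a := by
    intro a ha b hb
    obtain ⟨a, d, rfl⟩ := hs' a ha
    obtain ⟨b, d', rfl⟩ := hs' b hb
    rw [smul_mul_smul_comm, smul_mul_smul_comm, lgT_mul, lgT_mul, mul_comm, add_comm]
  let S := Algebra.adjoin A (s : Set (Module.End A ((Fin t → ℤ) → B)))
  have hmc : IsMulCommutative S := Algebra.isMulCommutative_adjoin A hcomm
  let _ : CommRing S := { (inferInstance : Ring S) with mul_comm := hmc.is_comm.comm }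
  have hft : Algebra.FiniteType A S := (Subalgebra.fg_iff_finiteType S).1 ⟨s, rfl⟩
  have hSN : IsNoetherianRing S := Algebra.FiniteType.isNoetherianRing A S
  obtain ⟨G, hG⟩ := (Module.Finite.fg_top : (⊤ : Submodule A B).FG)
  let X : Submodule S ((Fin t → ℤ) → B) := Submodule.span S (G.image (lgIota A B t))
  have hXfin : Module.Finite S X := Module.Finite.iff_fg.2 ⟨_, rfl⟩
  have hιX : ∀ x, lgIota A B t x ∈ X := by
    intro x
    have : (⊤ : Submodule A B) ≤ (X.restrictScalars A).comap (lgIota A B t) := by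
      rw [← hG, Submodule.span_le]
      intro y hy
      exact Submodule.subset_span (Finset.mem_image_of_mem _ hy)
    exact this trivial
  have hwS : ∀ i, lgT A B (-e i) ∈ S := fun i => Algebra.subset_adjoin ((hs _).2 (Or.inl ⟨i, rfl⟩))
  have haS : ∀ i, ∀ a ∈ I i, a • lgT A B (e i) ∈ S := by
    intro i
    have : I i ≤ (Subalgebra.toSubmodule S).comap (LinearMap.toSpanSingleton A _ (lgT A B (e i))) := by
      rw [← hg i, Submodule.span_le]
      intro a ha
      exact Algebra.subset_adjoin ((hs _).2 (Or.inr ⟨i, a, ha, rfl⟩))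
    intro a ha
    exact this ha
  let w : Fin t → S := fun i => ⟨lgT A B (-e i), hwS i⟩
  have hpow : ∀ n : Fin t → ℕ, ((∏ i, w i ^ n i : S) : Module.End A ((Fin t → ℤ) → B)) =
      lgT A B (-fun i => (n i : ℤ)) := by
    intro n
    induction n using lg_induct with
    | h0 =>
      simp only [Pi.zero_apply, pow_zero, Finset.prod_const_one]
      have : (-fun i => ((0 : ℕ) : ℤ) : Fin t → ℤ) = 0 := by funext i; simp
      rw [this, lgT_zero]
      rfl
    | hs n i ih =>
      rw [lg_prod_add]
      change lgT A B (-e i) * ((∏ i, w i ^ n i : S) : Module.End A ((Fin t → ℤ) → B)) = _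
      rw [ih, lgT_mul]
      congr 1
      funext j
      by_cases hj : j = i
      · subst hj; simp [e]
      · simp [e, hj]
  have hup : ∀ f ∈ X, ∀ d, f d ∈ ((∏ i, I i ^ (d i).toNat) • ⊤ : Submodule A B) := by
    have hstab : ∀ c ∈ S, ∀ f : (Fin t → ℤ) → B,
        (∀ d, f d ∈ ((∏ i, I i ^ (d i).toNat) • ⊤ : Submodule A B)) →
        ∀ d, c f d ∈ ((∏ i, I i ^ (d i).toNat) • ⊤ : Submodule A B) := by
      intro c hc
      induction hc using Algebra.adjoin_induction with
      | mem c hc =>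
        intro f hf d
        rcases (hs c).1 hc with ⟨i, rfl⟩ | ⟨i, a, ha, rfl⟩
        · rw [lgT_apply]
          refine Submodule.smul_mono_left (lg_pow_mono I ?_) (hf _)
          intro j
          apply Int.toNat_le_toNat
          by_cases hj : j = i
          · subst hj; simp [e]
          · simp [e, hj]
        · rw [LinearMap.smul_apply, Pi.smul_apply, lgT_apply]
          have haI : a ∈ I i := by rw [← hg i]; exact Submodule.subset_span ha
          have h1 := Submodule.smul_mem_smul haI (hf (d - e i))
          rw [← mul_smul, ← lg_prod_add I (fun j => ((d - e i) j).toNat)] at h1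
          refine Submodule.smul_mono_left (lg_pow_mono I ?_) h1
          intro j
          by_cases hj : j = i
          · subst hj; simp [e]; omega
          · simp [e, hj]
      | algebraMap r =>
        intro f hf d
        exact Submodule.smul_mem _ r (hf d)
      | add a b _ _ iha ihb =>
        intro f hf d
        exact Submodule.add_mem _ (iha f hf d) (ihb f hf d)
      | mul a b _ _ iha ihb =>
        intro f hf d
        exact iha (b f) (ihb f hf) d
    intro f hf
    induction hf using Submodule.span_induction with
    | mem f hf =>
      obtain ⟨x, _, rfl⟩ := Finset.mem_image.1 (Finset.mem_coe.1 hf)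
      intro d
      by_cases hd : d = 0
      · subst hd; simp only [Pi.zero_apply, Int.toNat_zero, pow_zero, Finset.prod_const_one, one_smul]; trivial
      · have : lgIota A B t x d = 0 := by simp [lgIota, hd]
        rw [this]; exact Submodule.zero_mem _
    | zero => intro d; exact Submodule.zero_mem _
    | add f g _ _ hf hg => intro d; exact Submodule.add_mem _ (hf d) (hg d)
    | smul c f _ hf => exact hstab c c.2 f hf
  have hlow : ∀ n : Fin t → ℕ, ((∏ i, I i ^ n i) • ⊤ : Submodule A B) ≤
      (X.restrictScalars A).comap (lgT A B (fun i => (n i : ℤ)) ∘ₗ lgIota A B t) := by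
    intro n
    induction n using lg_induct with
    | h0 =>
      intro x _
      have : (fun i => (((0 : Fin t → ℕ) i : ℕ) : ℤ) : Fin t → ℤ) = 0 := by funext i; simp
      rw [Submodule.mem_comap, LinearMap.comp_apply, this, lgT_zero]
      exact hιX x
    | hs n i ih =>
      rw [lg_prod_add, mul_smul, Submodule.smul_le]
      intro a ha x hx
      have hx' : lgT A B (fun i => (n i : ℤ)) (lgIota A B t x) ∈ X := ih hx
      have h1 := X.smul_mem ⟨_, haS i a ha⟩ hx'
      have h2 : (fun j => (((n + Pi.single i 1 : Fin t → ℕ) j : ℕ) : ℤ) : Fin t → ℤ) =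
          e i + fun i => (n i : ℤ) := by
        funext j
        by_cases hj : j = i
        · subst hj; simp [e]; ring
        · simp [e, hj]
      rw [Submodule.mem_comap, LinearMap.comp_apply, h2, ← lgT_mul, map_smul, map_smul]
      exact h1
  refine ⟨S, inferInstance, inferInstance, hSN, X, inferInstance, inferInstance,
    Submodule.module (X.restrictScalars A), ⟨fun a c z => Subtype.ext (smul_assoc a c z.1)⟩, hXfin, LinearMap.codRestrict (X.restrictScalars A) (lgIota A B t) hιX, w, ?_, ?_⟩
  · intro i z hz
    have h1 : lgT A B (-e i) (z : (Fin t → ℤ) → B) = 0 := congrArg Subtype.val hz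
    apply Subtype.ext
    have h2 : (lgT A B (e i) * lgT A B (-e i)) (z : (Fin t → ℤ) → B) = 0 := by
      rw [Module.End.mul_apply, h1, map_zero]
    rw [lgT_mul, add_neg_cancel, lgT_zero] at h2
    exact h2
  · intro n x
    constructor
    · rintro ⟨z, hz⟩
      have h1 : ((∏ i, w i ^ n i : S) : Module.End A ((Fin t → ℤ) → B)) z = lgIota A B t x :=
        congrArg Subtype.val hz
      rw [hpow] at h1
      have h2 := congrFun h1 0
      rw [lgIota_zero, lgT_apply] at h2
      have h3 := hup z z.2 (fun i => (n i : ℤ))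
      have h4 : (0 : Fin t → ℤ) - (-fun i => (n i : ℤ)) = fun i => (n i : ℤ) := by
        rw [zero_sub, neg_neg]
      rw [h4] at h2
      rw [h2] at h3
      simpa only [Int.toNat_natCast] using h3
    · intro hx
      refine ⟨⟨_, hlow n hx⟩, Subtype.ext ?_⟩
      change ((∏ i, w i ^ n i : S) : Module.End A ((Fin t → ℤ) → B))
        (lgT A B _ (lgIota A B t x)) = lgIota A B t x
      rw [hpow, ← Module.End.mul_apply, lgT_mul, neg_add_cancel, lgT_zero]
      rfl

end LgModel

theorem lg_transfer {A S B X : Type*} [CommRing A] [CommRing S] [Algebra A S]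
    [AddCommGroup B] [Module A B] [AddCommGroup X] [Module S X] [Module A X] [IsScalarTower A S X]
    (ι : B →ₗ[A] X) (P : Ideal A) (m : ℕ) {y : B} (hy : y ∈ (P ^ m • ⊤ : Submodule A B)) :
    ι y ∈ (P.map (algebraMap A S) ^ m • ⊤ : Submodule S X) := by
  have h1 : (P ^ m • ⊤ : Submodule A B) ≤
      ((P.map (algebraMap A S) ^ m • ⊤ : Submodule S X).restrictScalars A).comap ι := by
    rw [Submodule.smul_le]
    intro r hr x _
    rw [Submodule.mem_comap, map_smul, ← algebraMap_smul S r (ι x), ← Ideal.map_pow,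
      Submodule.restrictScalars_mem]
    exact Submodule.smul_mem_smul (Ideal.mem_map_of_mem _ hr) Submodule.mem_top
  exact h1 hy

/-- Linear Growth (Corollary 3.4): there is `k` such that for each `n` there is an
irredundant minimal primary decomposition of `I₁^{n₁}⋯I_t^{n_t}M` each of whose
`Pᵢ`-primary components contains `Pᵢ^{k|n|}M`. -/
theorem linear_growth [IsNoetherianRing R] [Module.Finite R M]
    (t : ℕ) (I : Fin t → Ideal R) :
    ∃ k : ℕ, ∀ n : Fin t → ℕ,
      ∃ (r : ℕ) (P : Fin r → Ideal R) (Q : Fin r → Submodule R M),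
        IsMinPD ((∏ i, I i ^ n i) • ⊤ : Submodule R M) P Q ∧
        ∀ i, (P i ^ (k * ∑ j, n j) • ⊤ : Submodule R M) ≤ Q i := by
  obtain ⟨S, _, _, _, X, _, _, _, _, _, ι, w, hw, hι⟩ := lg_model (A := R) (B := M) I
  -- the finite set of relevant primes
  let F : Set (Ideal R) := ⋃ i : Fin t, {P : Ideal R | P.IsPrime ∧
    ∃ z : X ⧸ (LinearMap.range (LinearMap.lsmul S X (w i))),
      ∀ r : R, r ∈ P ↔ algebraMap R S r • z = 0}
  have hF : F.Finite := Set.finite_iUnion fun i => lg_ass_finite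
  have hAss : ∀ n : Fin t → ℕ,
      ∀ P ∈ associatedPrimes R (M ⧸ ((∏ i, I i ^ n i) • ⊤ : Submodule R M)), P ∈ F := by
    intro n P hP
    obtain ⟨hPp, x, hx⟩ := (lg_mem_ass _ _).1 hP
    obtain ⟨i, y, hy⟩ := lg_descend w hw P hPp n (ι x) (fun r => by
      rw [hx, ← hι, map_smul, algebraMap_smul])
    refine Set.mem_iUnion.2 ⟨i, hPp, Submodule.Quotient.mk y, fun r => ?_⟩
    rw [hy, ← Submodule.Quotient.mk_smul, Submodule.Quotient.mk_eq_zero]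
    rfl
  choose k0 hk0 using fun P : Ideal R => lg_core (X := X) w hw (P.map (algebraMap R S))
  refine ⟨∑ P ∈ hF.toFinset, k0 P, fun n => lg_assemble _ _ ?_⟩
  intro P hP y hy hPy
  have hPF : P ∈ hF.toFinset := hF.mem_toFinset.2 (hAss n P hP)
  have hk : k0 P ≤ ∑ P ∈ hF.toFinset, k0 P :=
    Finset.single_le_sum (f := k0) (fun _ _ => Nat.zero_le _) hPF
  rw [← hι]
  refine hk0 P _ hk n (ι y) ?_ ?_
  · exact lg_transfer ι P _ hy
  · intro j hj
    rw [Ideal.map, Ideal.span] at hj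
    induction hj using Submodule.span_induction with
    | mem j hj =>
      obtain ⟨r, hr, rfl⟩ := hj
      obtain ⟨z, hz⟩ := (hι n (r • y)).2 (hPy r hr)
      exact ⟨z, by rw [hz, algebraMap_smul, map_smul]⟩
    | zero => exact ⟨0, by rw [smul_zero, zero_smul]⟩
    | add a b _ _ ha hb =>
      obtain ⟨z, hz⟩ := ha
      obtain ⟨z', hz'⟩ := hb
      exact ⟨z + z', by rw [smul_add, hz, hz', add_smul]⟩
    | smul c a _ ha =>
      obtain ⟨z, hz⟩ := ha
      exact ⟨c • z, by rw [smul_comm, hz, smul_eq_mul, mul_smul]⟩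
end

section
/- Let R be a Noetherian ring, M a finitely generated R-module, N ⊊ M, and P ∈ Ass(M/N). Suppose W is a submodule with N = W ∩ (N :_M P^∞) and Ass(M/W) contains P. Let W = Q₁ ∩ ... ∩ Q_r be an irredundant minimal primary decomposition with Q₁ being P-primary. Then Q₁ is a P-primary component of N in M, i.e., Q₁ occurs in some irredundant minimal primary decomposition of N in M. -/
open Submodule

variable {R M : Type*} [CommRing R] [AddCommGroup M] [Module R M]

theorem ass_quot_iff (A : Submodule R M) (p : Ideal R) :
    p ∈ associatedPrimes R (M ⧸ A) ↔ p ∈ A.associatedPrimes := by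
  have key : ∀ x : M, colon (⊥ : Submodule R (M ⧸ A)) {A.mkQ x} = A.colon {x} := by
    intro x
    ext r
    rw [mem_colon_singleton, mem_colon_singleton, mem_bot, ← map_smul, mkQ_apply,
      Submodule.Quotient.mk_eq_zero]
  constructor
  · rintro ⟨h, y, hy⟩
    obtain ⟨x, rfl⟩ := A.mkQ_surjective y
    exact ⟨h, x, by rw [hy, key]⟩
  · rintro ⟨h, x, hx⟩
    exact ⟨h, A.mkQ x, by rw [hx, key]⟩

theorem ass_finset_inf [IsNoetherianRing R] (s : Finset (Submodule R M)) (p : Ideal R)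
    (h : p ∈ (s.inf id).associatedPrimes) : ∃ J ∈ s, p ∈ J.associatedPrimes := by
  obtain ⟨hp, x, hx⟩ := Submodule.isAssociatedPrime_iff.mp h
  rw [colon_finsetInf] at hx
  rw [hx] at hp
  obtain ⟨q, hq1, hq2⟩ := Ideal.eq_inf_of_isPrime_inf hp
  refine ⟨q, hq1, Submodule.isAssociatedPrime_iff.mpr ⟨hx ▸ hp, x, ?_⟩⟩
  rw [hx, ← hq2]; rfl

theorem ass_primary {J : Submodule R M} (hJ : J.IsPrimary) :
    J.associatedPrimes = {(J.colon Set.univ).radical} := by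
  have : J.IsMinimalPrimaryDecomposition {J} :=
    ⟨by simp, by simpa using hJ, by simp, by simpa using hJ.ne_top⟩
  rw [← this.image_radical_eq_associated_primes]
  simp

theorem not_mem_ass_sat [IsNoetherianRing R] [Module.Finite R M] (N : Submodule R M)
    (P : Ideal R) : P ∉ (sat P N).associatedPrimes := by
  intro h
  obtain ⟨hp, x, hx⟩ := Submodule.isAssociatedPrime_iff.mp h
  let f : ℕ → Submodule R M := fun n => ⨅ r ∈ (P ^ n : Ideal R), N.comap (LinearMap.lsmul R M r)
  have memf : ∀ n y, y ∈ f n ↔ ∀ r ∈ P ^ n, r • y ∈ N := by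
    intro n y
    simp [f, Submodule.mem_iInf]
  have hf : Monotone f := by
    intro n m hnm y hy
    rw [memf] at hy ⊢
    exact fun r hr => hy r (Ideal.pow_le_pow_right hnm hr)
  obtain ⟨n, hn⟩ := monotone_stabilizes_iff_noetherian.mpr
    (inferInstance : IsNoetherian R M) ⟨f, hf⟩
  have hs : sat P N = f n := by
    apply le_antisymm
    · refine iSup_le fun m => ?_
      rcases le_total m n with h | h
      · exact hf h
      · exact (hn m h).ge
    · exact le_iSup f n
  have hx1 : x ∈ f (n + 1) := by
    rw [memf]
    intro r hr
    rw [pow_succ] at hr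
    refine Submodule.mul_induction_on hr ?_ ?_
    · intro a ha b hb
      rw [hx, hs, mem_colon_singleton, memf] at hb
      rw [mul_smul]
      exact hb a ha
    · intro a b ha hb
      rw [add_smul]
      exact N.add_mem ha hb
  have hx2 : x ∈ sat P N := by
    rw [hs]
    exact (hn (n + 1) n.le_succ).ge hx1
  apply hp.ne_top
  rw [hx, Ideal.eq_top_iff_one, mem_colon_singleton, one_smul]
  exact hx2

/-- Key step in Corollary 3.4: if `N = W ⊓ (N :_M P^∞)`, `P ∈ Ass(M/W)`, and
`W = Q₁ ∩ ⋯ ∩ Q_r` is an irredundant minimal primary decomposition with `Q_{i₀}`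
being `P`-primary, then `Q_{i₀}` is a `P`-primary component of `N` in `M`. -/
theorem primary_component_of_inter [IsNoetherianRing R] [Module.Finite R M]
    (N : Submodule R M) (hN : N ≠ ⊤) (P : Ideal R)
    (hP : P ∈ associatedPrimes R (M ⧸ N))
    (W : Submodule R M) (hW : N = W ⊓ sat P N)
    (hPW : P ∈ associatedPrimes R (M ⧸ W))
    (r : ℕ) (Pf : Fin r → Ideal R) (Qf : Fin r → Submodule R M)
    (hPD : IsMinPD W Pf Qf) (i₀ : Fin r) (hi₀ : Pf i₀ = P) :
    IsPrimaryComponent N P (Qf i₀) := by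
  classical
  obtain ⟨hQ, hinj, hWeq, -⟩ := hPD
  have hQ' : ∀ i, (Qf i).associatedPrimes = {Pf i} := by
    intro i
    rw [← hQ i]
    ext p
    rw [ass_quot_iff]
  have hPN : P ∈ N.associatedPrimes := (ass_quot_iff N P).mp hP
  let s : Finset (Submodule R M) := insert (sat P N) ((Finset.univ.erase i₀).image Qf)
  obtain ⟨t, ht⟩ := (Submodule.isLasker R M).exists_isMinimalPrimaryDecomposition (s.inf id)
  have hPs : P ∉ (s.inf id).associatedPrimes := by
    intro h
    obtain ⟨J, hJ, hPJ⟩ := ass_finset_inf s P h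
    rcases Finset.mem_insert.mp hJ with rfl | hJ
    · exact not_mem_ass_sat N P hPJ
    · obtain ⟨i, hi, rfl⟩ := Finset.mem_image.mp hJ
      rw [hQ' i, Set.mem_singleton_iff, ← hi₀] at hPJ
      exact (Finset.mem_erase.mp hi).1 (hinj hPJ).symm
  have hrad : ∀ J ∈ t, (J.colon Set.univ).radical ≠ P := by
    intro J hJ h
    exact hPs (h ▸ ht.mem_associatedPrimes hJ)
  have hNeq : (insert (Qf i₀) t).inf id = N := by
    have hNW : N ≤ W := hW.le.trans inf_le_left
    have hNS : N ≤ sat P N := hW.le.trans inf_le_right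
    have hWQ : ∀ i, W ≤ Qf i := fun i => hWeq.le.trans (iInf_le _ i)
    rw [Finset.inf_insert, ht.inf_eq, Finset.inf_insert, Finset.inf_image]
    apply le_antisymm
    · refine le_trans (le_inf ?_ (inf_le_right.trans inf_le_left)) hW.ge
      refine le_trans (le_iInf fun i => ?_) hWeq.ge
      by_cases h : i = i₀
      · subst h; exact inf_le_left
      · refine inf_le_right.trans (inf_le_right.trans ?_)
        exact Finset.inf_le (f := id ∘ Qf) (Finset.mem_erase.mpr ⟨h, Finset.mem_univ i⟩)
    · refine le_inf (hNW.trans (hWQ _)) (le_inf hNS ?_)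
      exact Finset.le_inf fun i _ => hNW.trans (hWQ i)
  obtain ⟨u, hut, huN, hu⟩ := Submodule.decomposition_erase_inf hNeq
  let p : Submodule R M → Ideal R := fun J =>
    if J = Qf i₀ then P else (J.colon Set.univ).radical
  have hp : ∀ J ∈ u, J.associatedPrimes = {p J} := by
    intro J hJ
    by_cases h : J = Qf i₀
    · simp only [p, if_pos h]
      rw [h, hQ', hi₀]
    · simp only [p, if_neg h]
      exact ass_primary (ht.primary ((Finset.mem_insert.mp (hut hJ)).resolve_left h))
  have hpinj : ∀ J ∈ u, ∀ K ∈ u, p J = p K → J = K := by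
    intro J hJ K hK h
    have hJ' := Finset.mem_insert.mp (hut hJ)
    have hK' := Finset.mem_insert.mp (hut hK)
    by_cases h1 : J = Qf i₀ <;> by_cases h2 : K = Qf i₀
    · rw [h1, h2]
    · simp only [p, if_pos h1, if_neg h2] at h
      exact absurd h.symm (hrad K (hK'.resolve_left h2))
    · simp only [p, if_neg h1, if_pos h2] at h
      exact absurd h (hrad J (hJ'.resolve_left h1))
    · simp only [p, if_neg h1, if_neg h2] at h
      exact Submodule.IsMinimalPrimaryDecomposition.injOn _ t ht (hJ'.resolve_left h1) (hK'.resolve_left h2) h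
  have hmem : Qf i₀ ∈ u := by
    obtain ⟨J, hJ, hPJ⟩ := ass_finset_inf u P (huN ▸ hPN)
    rw [hp J hJ, Set.mem_singleton_iff] at hPJ
    by_cases h : J = Qf i₀
    · exact h ▸ hJ
    · simp only [p, if_neg h] at hPJ
      exact absurd hPJ.symm (hrad J ((Finset.mem_insert.mp (hut hJ)).resolve_left h))
  let e := u.equivFin
  refine ⟨u.card, fun i => p (e.symm i), fun i => (e.symm i : Submodule R M), e ⟨_, hmem⟩,
    ⟨?_, ?_, ?_, ?_⟩, ?_, ?_⟩
  · intro i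
    rw [← hp _ (e.symm i).2]
    ext q
    rw [ass_quot_iff]
  · intro i j hij
    exact e.symm.injective (Subtype.ext (hpinj _ (e.symm i).2 _ (e.symm j).2 hij))
  · rw [← huN]
    apply le_antisymm
    · exact le_iInf fun i => Finset.inf_le (f := id) (e.symm i).2
    · refine Finset.le_inf fun J hJ => ?_
      refine (iInf_le _ (e ⟨J, hJ⟩)).trans ?_
      simp
  · intro i h
    apply hu (e.symm i).2
    have h1 : (u.erase (e.symm i)).inf id ≤ N := by
      rw [h]
      refine le_iInf fun j => le_iInf fun hj => ?_
      refine Finset.inf_le (f := id) (Finset.mem_erase.mpr ⟨?_, (e.symm j).2⟩)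
      intro hh
      exact hj (e.symm.injective (Subtype.ext hh))
    refine h1.trans ?_
    rw [← huN]
    exact Finset.inf_le (f := id) (e.symm i).2
  · simp [p]
  · simp
end

section
/- Let R be a Noetherian ring, M a finitely generated R-module, N ⊊ M a submodule, and P ∈ Ass(M/N). Then P ∉ Ass(M / (N :_M P^∞)), where (N :_M P^∞) = ∪_i (N :_M P^i). -/
open Submodule

variable {R M : Type*} [CommRing R] [AddCommGroup M] [Module R M]

/-- If `P ∈ Ass(M/N)` then `P ∉ Ass(M/(N :_M P^∞))`. -/
theorem not_mem_associatedPrimes_saturation [IsNoetherianRing R] [Module.Finite R M]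
    (N : Submodule R M) (hN : N ≠ ⊤) (P : Ideal R)
    (hP : P ∈ associatedPrimes R (M ⧸ N)) :
    P ∉ associatedPrimes R (M ⧸ sat P N) := by
  intro h
  rw [AssociatedPrimes.mem_iff, isAssociatedPrime_iff] at h
  obtain ⟨hp, x, hx⟩ := h
  obtain ⟨x, rfl⟩ := Submodule.mkQ_surjective _ x
  haveI : IsNoetherian R M := isNoetherian_of_isNoetherianRing_of_finite R M
  have hmem : ∀ (n : ℕ) (y : M),
      y ∈ (⨅ r ∈ (P ^ n : Ideal R), N.comap (LinearMap.lsmul R M r)) ↔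
        ∀ r ∈ P ^ n, r • y ∈ N := by
    intro n y
    simp [Submodule.mem_iInf]
  let F : ℕ →o Submodule R M :=
    ⟨fun n => ⨅ r ∈ (P ^ n : Ideal R), N.comap (LinearMap.lsmul R M r), by
      intro m n hmn y hy
      rw [hmem] at hy ⊢
      exact fun r hr => hy r (Ideal.pow_le_pow_right hmn hr)⟩
  obtain ⟨n, hn⟩ := monotone_stabilizes_iff_noetherian.mpr this F
  have hsat : sat P N = F n := by
    apply le_antisymm
    · refine iSup_le fun m => ?_
      have h1 : F m ≤ F (max n m) := F.monotone (le_max_right _ _)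
      rw [← hn _ (le_max_left _ _)] at h1
      exact h1
    · exact le_iSup (fun m => (F m : Submodule R M)) n
  have hPx : ∀ r ∈ P, r • x ∈ sat P N := by
    intro r hr
    rw [hx, mem_colon_singleton, mem_bot, ← map_smul, Submodule.mkQ_apply,
      Submodule.Quotient.mk_eq_zero] at hr
    exact hr
  have hxs : x ∈ sat P N := by
    rw [hsat, hn (n + 1) (Nat.le_succ n)]
    refine (hmem (n + 1) x).mpr fun r hr => ?_
    rw [pow_succ] at hr
    refine Submodule.mul_induction_on hr ?_ ?_
    · intro a ha b hb
      have h2 := hPx b hb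
      rw [hsat] at h2
      rw [mul_smul]
      exact (hmem n _).mp h2 a ha
    · intro a b ha hb
      rw [add_smul]
      exact N.add_mem ha hb
  apply hp.ne_top
  rw [hx, show (sat P N).mkQ x = 0 by simpa using hxs]
  simp
end

section
/- Let R be a Noetherian ring, M a finitely generated faithful... (drop faithful) — Let R be Noetherian, M finitely generated, I an ideal, and suppose the filtration {I^{n*}M} satisfies I^{(n+1)*} M = I · I^{n*} M for all sufficiently large n, where {F_n} is any descending multiplicative filtration of submodules of M with I F_n ⊆ F_{n+1} ⊆ F_n. More precisely: if {F_n}_{n≥0} is a descending chain of submodules of M with I F_n ⊆ F_{n+1} for all n and F_{n+1} = I F_n for all n ≫ 0, then Ass(M/F_n) is the same set for all sufficiently large n. -/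
open Submodule

variable {R M : Type*} [CommRing R] [AddCommGroup M] [Module R M]

/-- A sequence of subsets of a finite set that is eventually increasing is eventually constant. -/
theorem BrodAux.stab {α : Type*} (f : ℕ → Set α) (U : Set α) (hU : U.Finite) (l : ℕ)
    (hf : ∀ n ≥ l, f n ⊆ f (n + 1)) (hfU : ∀ n ≥ l, f n ⊆ U) :
    ∃ n₁ ≥ l, ∀ n ≥ n₁, f n = f n₁ := by
  have : Finite (U.powerset) := hU.powerset
  let g : ℕ →o U.powerset :=
    ⟨fun n => ⟨f (l + n), hfU _ (by omega)⟩,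
      monotone_nat_of_le_succ fun n => hf (l + n) (by omega)⟩
  obtain ⟨k, hk⟩ := WellFoundedGT.monotone_chain_condition g
  refine ⟨l + k, by omega, fun n hn => ?_⟩
  have h := congrArg Subtype.val (hk (n - l) (by omega))
  change f (l + k) = f (l + (n - l)) at h
  rw [h]
  congr 1
  omega

/-- Associated primes of `M / N`, elementwise. -/
def BrodAux.T (N : Submodule R M) : Set (Ideal R) :=
  {P | P.IsPrime ∧ ∃ x : M, ∀ r, r ∈ P ↔ r • x ∈ N}

/-- Associated primes of `L / N`, elementwise. -/
def BrodAux.S (L N : Submodule R M) : Set (Ideal R) :=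
  {P | P.IsPrime ∧ ∃ x ∈ L, ∀ r, r ∈ P ↔ r • x ∈ N}

theorem BrodAux.ass_eq [IsNoetherianRing R] (N : Submodule R M) :
    associatedPrimes R (M ⧸ N) = BrodAux.T N := by
  ext P
  rw [AssociatedPrimes.mem_iff, isAssociatedPrime_iff]
  refine and_congr_right fun _ => ?_
  constructor
  · rintro ⟨x, hx⟩
    obtain ⟨x, rfl⟩ := Submodule.mkQ_surjective N x
    refine ⟨x, fun r => ?_⟩
    rw [hx, Submodule.mem_colon_singleton, ← map_smul, Submodule.mem_bot,
      Submodule.mkQ_apply, Submodule.Quotient.mk_eq_zero]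
  · rintro ⟨x, hx⟩
    refine ⟨N.mkQ x, ?_⟩
    ext r
    rw [hx, Submodule.mem_colon_singleton, ← map_smul, Submodule.mem_bot,
      Submodule.mkQ_apply, Submodule.Quotient.mk_eq_zero]

theorem BrodAux.S_sub (L N : Submodule R M) : BrodAux.S L N ⊆ BrodAux.T N := by
  rintro P ⟨hP, x, _, hx⟩
  exact ⟨hP, x, hx⟩

theorem BrodAux.T_sub (L N : Submodule R M) (h : N ≤ L) :
    BrodAux.T N ⊆ BrodAux.S L N ∪ BrodAux.T L := by
  rintro P ⟨hP, x, hx⟩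
  by_cases hc : ∀ r, r • x ∈ L → r ∈ P
  · exact Or.inr ⟨hP, x, fun r => ⟨fun hr => h ((hx r).1 hr), hc r⟩⟩
  · push Not at hc
    obtain ⟨r, hrL, hrP⟩ := hc
    refine Or.inl ⟨hP, r • x, hrL, fun s => ?_⟩
    rw [smul_smul, ← hx]
    exact ⟨fun hs => P.mul_mem_right _ hs, fun hs => (hP.mem_or_mem hs).resolve_right hrP⟩

/-- Eventually multiplication by `I` is injective on the graded pieces. -/
theorem BrodAux.inj [IsNoetherianRing R] [Module.Finite R M] {I : Ideal R} (F : I.Filtration M)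
    (hF : F.Stable) :
    ∃ l, ∀ n ≥ l, ∀ x ∈ F.N n, (∀ a ∈ I, a • x ∈ F.N (n + 2)) → x ∈ F.N (n + 1) := by
  let F' : I.Filtration M :=
    { N := fun n =>
        { carrier := {x | x ∈ F.N n ∧ ∀ a ∈ I, a • x ∈ F.N (n + 2)}
          add_mem' := fun {x y} hx hy => ⟨add_mem hx.1 hy.1, fun a ha => by
            rw [smul_add]; exact add_mem (hx.2 a ha) (hy.2 a ha)⟩
          zero_mem' := ⟨zero_mem _, fun a _ => by rw [smul_zero]; exact zero_mem _⟩
          smul_mem' := fun c x hx => ⟨Submodule.smul_mem _ _ hx.1, fun a ha => by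
            rw [smul_comm]; exact Submodule.smul_mem _ _ (hx.2 a ha)⟩ }
      mono := fun n x hx => ⟨F.mono n hx.1, fun a ha => F.mono _ (hx.2 a ha)⟩
      smul_le := fun n => by
        rw [Submodule.smul_le]
        intro r hr x hx
        refine ⟨F.smul_le n (Submodule.smul_mem_smul hr hx.1), fun a ha => ?_⟩
        exact F.smul_le (n + 2) (Submodule.smul_mem_smul ha (hx.2 r hr)) }
  have hle : F' ≤ F := fun n x hx => hx.1
  obtain ⟨l, hl⟩ := hF.of_le hle
  refine ⟨l + 1, fun n hn x hx hxI => ?_⟩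
  obtain ⟨m, rfl⟩ : ∃ m, n = m + 1 := ⟨n - 1, by omega⟩
  have hx' : x ∈ F'.N (m + 1) := ⟨hx, hxI⟩
  rw [← hl m (by omega)] at hx'
  have : I • F'.N m ≤ F.N (m + 2) := by
    rw [Submodule.smul_le]
    intro r hr y hy
    exact hy.2 r hr
  exact this hx'

theorem BrodAux.S_mono [IsNoetherianRing R] {I : Ideal R} (F : I.Filtration M) (n : ℕ)
    (hn : ∀ x ∈ F.N n, (∀ a ∈ I, a • x ∈ F.N (n + 2)) → x ∈ F.N (n + 1)) :
    BrodAux.S (F.N n) (F.N (n + 1)) ⊆ BrodAux.S (F.N (n + 1)) (F.N (n + 2)) := by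
  rintro P ⟨hP, x, hxF, hx⟩
  obtain ⟨t, ht⟩ := (inferInstance : IsNoetherianRing R).noetherian I
  have htI : ∀ a ∈ t, a ∈ I := fun a ha => ht ▸ Submodule.subset_span ha
  by_cases hc : ∃ a ∈ t, ∀ s, s • a • x ∈ F.N (n + 2) → s ∈ P
  · obtain ⟨a, hat, ha⟩ := hc
    have haI := htI a hat
    refine ⟨hP, a • x, F.smul_le n (Submodule.smul_mem_smul haI hxF), fun s => ⟨fun hs => ?_, ha s⟩⟩
    rw [smul_comm]
    exact F.smul_le (n + 1) (Submodule.smul_mem_smul haI ((hx s).1 hs))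
  · exfalso
    push Not at hc
    choose! s hs hsP using hc
    have hprod : ∏ a ∈ t, s a ∉ P := by
      rw [hP.prod_mem_iff]
      rintro ⟨a, ha, h⟩
      exact hsP a ha h
    apply hprod
    rw [hx]
    refine hn _ (Submodule.smul_mem _ _ hxF) ?_
    have hle : I ≤ (F.N (n + 2)).colon {(∏ a ∈ t, s a) • x} := by
      refine ht.symm.le.trans (Submodule.span_le.2 ?_)
      intro a ha
      rw [SetLike.mem_coe, Submodule.mem_colon_singleton]
      obtain ⟨c, hc⟩ := Finset.dvd_prod_of_mem s ha
      rw [hc, smul_smul, show a * (s a * c) = c * (s a * a) by ring, mul_smul, mul_smul]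
      exact Submodule.smul_mem _ _ (hs a ha)
    intro a ha
    exact Submodule.mem_colon_singleton.1 (hle ha)

/-- Primes of `R` cut out by elements of a finite module over a Noetherian algebra. -/
theorem BrodAux.contract {R A E : Type*} [CommRing R] [CommRing A] [IsNoetherianRing A]
    [Algebra R A] [AddCommGroup E] [Module A E] (L K : Submodule A E) (hL : L.FG) :
    ∃ U : Set (Ideal R), U.Finite ∧ ∀ P : Ideal R, P.IsPrime → ∀ z ∈ L,
      (∀ r, r ∈ P ↔ algebraMap R A r • z ∈ K) → P ∈ U := by
  have : Module.Finite A L := Module.Finite.iff_fg.2 hL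
  let K' : Submodule A L := K.comap L.subtype
  refine ⟨Ideal.comap (algebraMap R A) '' associatedPrimes A (L ⧸ K'),
    (associatedPrimes.finite _ _).image _, ?_⟩
  intro P hP z hz hx
  have hcomap : Ideal.comap (algebraMap R A)
      ((⊥ : Submodule A (L ⧸ K')).colon {K'.mkQ ⟨z, hz⟩}) = P := by
    ext r
    rw [Ideal.mem_comap, Submodule.mem_colon_singleton, ← map_smul, Submodule.mem_bot,
      Submodule.mkQ_apply, Submodule.Quotient.mk_eq_zero, hx]
    rfl
  obtain ⟨q, hq, hqP⟩ := Ideal.exists_minimalPrimes_comap_eq (algebraMap R A) P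
    (by rw [hcomap, Ideal.minimalPrimes_eq_subsingleton_self]; rfl)
  exact ⟨q, isAssociatedPrime_iff.2
    ⟨hq.1.1, Submodule.exists_eq_colon_of_mem_minimalPrimes hq⟩, hqP⟩

theorem BrodAux.S_finite [IsNoetherianRing R] [Module.Finite R M] {I : Ideal R}
    (F : I.Filtration M) (hF : F.Stable) :
    ∃ U : Set (Ideal R), U.Finite ∧ ∀ n, BrodAux.S (F.N n) (F.N (n + 1)) ⊆ U := by
  let F' : I.Filtration M := ⟨fun n => F.N (n + 1), fun n => F.mono _, fun n => F.smul_le _⟩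
  have hfg : F.submodule.FG := (F.submodule_fg_iff_stable fun i => IsNoetherian.noetherian _).2 hF
  obtain ⟨U, hU, h⟩ := BrodAux.contract (R := R) F.submodule F'.submodule hfg
  refine ⟨U, hU, ?_⟩
  rintro n P ⟨hP, x, hxF, hx⟩
  have hmem : ∀ (G : I.Filtration M) (y : M),
      PolynomialModule.single R n y ∈ G.submodule ↔ y ∈ G.N n := by
    intro G y
    rw [Ideal.Filtration.mem_submodule]
    constructor
    · intro h
      simpa using h n
    · intro h i
      rw [PolynomialModule.coeff_single, Finsupp.single_apply]
      split_ifs with hi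
      · exact hi ▸ h
      · exact zero_mem _
  refine h P hP (PolynomialModule.single R n x) ((hmem F x).2 hxF) fun r => ?_
  rw [hx]
  change r • x ∈ F'.N n ↔ _
  rw [← hmem F', algebraMap_smul, PolynomialModule.single_smul]

/-- Stability of associated primes for an eventually `I`-stable descending filtration:
if `F` is descending, `I • F n ⊆ F (n+1)` for all `n`, and `F (n+1) = I • F n` for all
`n ≫ 0`, then `Ass(M/F n)` is eventually constant. -/
theorem associatedPrimes_filtration_stabilize [IsNoetherianRing R] [Module.Finite R M]
    (I : Ideal R) (F : ℕ → Submodule R M)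
    (hdesc : ∀ n, F (n + 1) ≤ F n)
    (hsub : ∀ n, I • F n ≤ F (n + 1))
    (hstab : ∃ n₀ : ℕ, ∀ n ≥ n₀, F (n + 1) = I • F n) :
    ∃ n₁ : ℕ, ∀ n ≥ n₁, associatedPrimes R (M ⧸ F n) = associatedPrimes R (M ⧸ F n₁) := by
  let G : I.Filtration M := ⟨F, hdesc, hsub⟩
  have hG : G.Stable := by
    obtain ⟨n₀, h⟩ := hstab
    exact ⟨n₀, fun n hn => (h n hn).symm⟩
  obtain ⟨l, hl⟩ := BrodAux.inj G hG
  obtain ⟨U, hU, hSU⟩ := BrodAux.S_finite G hG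
  obtain ⟨k, hkl, hk⟩ := BrodAux.stab (fun n => BrodAux.S (F n) (F (n + 1))) U hU l
    (fun n hn => BrodAux.S_mono G n (hl n hn)) (fun n _ => hSU n)
  have hfin : ∀ n, (BrodAux.T (F n)).Finite := fun n => by
    rw [← BrodAux.ass_eq]
    exact associatedPrimes.finite _ _
  have hanti : ∀ n ≥ k + 1, BrodAux.T (F (n + 1)) ⊆ BrodAux.T (F n) := by
    intro n hn
    refine (BrodAux.T_sub _ _ (hdesc n)).trans (Set.union_subset ?_ subset_rfl)
    obtain ⟨m, rfl⟩ : ∃ m, n = m + 1 := ⟨n - 1, by omega⟩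
    have h1 := hk (m + 1) (by omega)
    have h2 := hk m (by omega)
    exact (h1.trans h2.symm).le.trans (BrodAux.S_sub _ _)
  have hsubV : ∀ n ≥ k + 1, BrodAux.T (F n) ⊆ BrodAux.T (F (k + 1)) := by
    intro n hn
    induction n, hn using Nat.le_induction with
    | base => exact subset_rfl
    | succ n hn ih => exact (hanti n hn).trans ih
  obtain ⟨n₁, hn₁, h⟩ := BrodAux.stab
    (fun n => BrodAux.T (F (k + 1)) \ BrodAux.T (F n)) _ (hfin (k + 1)) (k + 1)
    (fun n hn => Set.sdiff_subset_sdiff_right (hanti n hn)) (fun n _ => Set.sdiff_subset)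
  refine ⟨n₁, fun n hn => ?_⟩
  rw [BrodAux.ass_eq, BrodAux.ass_eq, ← Set.sdiff_sdiff_cancel_left (hsubV n (hn₁.le.trans hn)),
    ← Set.sdiff_sdiff_cancel_left (hsubV n₁ hn₁)]
  exact congrArg _ (h n hn)
end

section
/- Let R be a Noetherian ring, M a finitely generated R-module, and I₁, ..., I_t ideals. Then the set ∪_{(n₁,...,n_t) ∈ ℕ^t} Ass(M / I₁^{n₁}⋯I_t^{n_t} M) is finite. -/
open Submodule

variable {R M : Type*} [CommRing R] [AddCommGroup M] [Module R M]

theorem exists_comap_eq_of_semilinear {R A L N : Type*} [CommRing R] [CommRing A]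
    [IsNoetherianRing R] [IsNoetherianRing A] [AddCommGroup L] [Module R L]
    [AddCommGroup N] [Module A N] (φ : R →+* A) (f : L →ₛₗ[φ] N) (hf : Function.Injective f)
    {p : Ideal R} (hp : p ∈ associatedPrimes R L) :
    ∃ P ∈ associatedPrimes A N, P.comap φ = p := by
  rw [AssociatedPrimes.mem_iff, isAssociatedPrime_iff] at hp
  obtain ⟨hpp, x, hx⟩ := hp
  obtain ⟨P, ⟨hP, y, rfl⟩, hmax⟩ :=
    set_has_maximal_iff_noetherian.mpr (inferInstanceAs (IsNoetherian A A))
      {P : Ideal A | Ideal.comap φ P = p ∧ ∃ y : N, P = (⊥ : Submodule A N).colon {y}}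
      ⟨(⊥ : Submodule A N).colon {f x}, by
        ext r
        rw [hx, Ideal.mem_comap, Submodule.mem_colon_singleton, Submodule.mem_colon_singleton, Submodule.mem_bot, Submodule.mem_bot,
          ← map_smulₛₗ f, map_eq_zero_iff f hf], f x, rfl⟩
  refine ⟨_, ?_, hP⟩
  rw [AssociatedPrimes.mem_iff, isAssociatedPrime_iff]
  refine ⟨⟨?_, ?_⟩, y, rfl⟩
  · intro h
    apply hpp.ne_top
    rw [← hP, h, Ideal.comap_top]
  intro a b hab
  by_contra! h
  obtain ⟨ha, hb⟩ := h
  have key : ∀ (c d : A), c ∉ (⊥ : Submodule A N).colon {y} →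
      c * d ∈ (⊥ : Submodule A N).colon {y} →
      ∃ s ∉ p, φ s * d ∈ (⊥ : Submodule A N).colon {y} := by
    intro c d hc hcd
    by_contra! hs
    have hle : (⊥ : Submodule A N).colon {y} ≤ (⊥ : Submodule A N).colon {d • y} := by
      intro e he
      rw [Submodule.mem_colon_singleton, Submodule.mem_bot] at he ⊢
      rw [smul_comm, he, smul_zero]
    refine hmax ((⊥ : Submodule A N).colon {d • y}) ⟨le_antisymm ?_ ?_, _, rfl⟩
      (lt_of_le_of_ne hle ?_)
    · intro s h1
      by_contra h2
      apply hs s h2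
      rw [Ideal.mem_comap, Submodule.mem_colon_singleton] at h1
      rw [Submodule.mem_colon_singleton, mul_smul]
      exact h1
    · rw [← hP]
      exact Ideal.comap_mono hle
    · intro he
      apply hc
      rw [he, Submodule.mem_colon_singleton, ← mul_smul]
      rwa [Submodule.mem_colon_singleton] at hcd
  obtain ⟨s, hs, hsa⟩ := key b a hb (by rwa [mul_comm])
  obtain ⟨s', hs', hsa'⟩ := key a (φ s) ha (by rwa [mul_comm])
  rw [← map_mul, ← Ideal.mem_comap, hP] at hsa'
  exact (hpp.mem_or_mem hsa').elim hs' hs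

section step

/-- The Rees module as a type. -/
def ReesMod (M : Type*) [AddCommGroup M] [Module R M] (I : Ideal R) : Type _ :=
  ↥((I.stableFiltration (⊤ : Submodule R M)).submodule)

noncomputable instance (I : Ideal R) : AddCommGroup (ReesMod M I) :=
  inferInstanceAs (AddCommGroup ↥((I.stableFiltration (⊤ : Submodule R M)).submodule))

noncomputable instance (I : Ideal R) : Module (reesAlgebra I) (ReesMod M I) :=
  inferInstanceAs (Module (reesAlgebra I) ↥((I.stableFiltration (⊤ : Submodule R M)).submodule))

theorem reesMod_algebraMap_smul (I : Ideal R) (r : R) (y : PolynomialModule R M) :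
    algebraMap R (reesAlgebra I) r • y = r • y := by
  rw [Subalgebra.smul_def]
  exact algebraMap_smul (Polynomial R) r y

theorem reesMod_coeff (I K : Ideal R) (n : ℕ) (y : ReesMod M I)
    (hy : y ∈ (K.map (algebraMap R (reesAlgebra I)) • ⊤ : Submodule (reesAlgebra I) (ReesMod M I))) :
    y.1.coeff n ∈ K • (I ^ n • ⊤ : Submodule R M) := by
  refine Submodule.smul_induction_on hy ?_ ?_
  · intro a ha z _
    unfold Ideal.map at ha
    induction ha using Submodule.span_induction generalizing z with
    | mem a ha =>
      obtain ⟨k, hk, rfl⟩ := ha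
      have : (algebraMap R (reesAlgebra I) k • z : ReesMod M I).1 = k • z.1 := reesMod_algebraMap_smul I k z.1
      rw [this]
      exact Submodule.smul_mem_smul hk (z.2 n)
    | zero =>
      rw [zero_smul]
      exact Submodule.zero_mem _
    | add a b _ _ h1 h2 =>
      rw [add_smul]
      exact Submodule.add_mem _ (h1 z trivial) (h2 z trivial)
    | smul a b _ h =>
      rw [smul_eq_mul, mul_comm, mul_smul]
      exact h _ trivial
  · intro a b ha hb
    exact Submodule.add_mem _ ha hb

/-- The inclusion of a graded piece. -/
noncomputable def reesIncl (I : Ideal R) (n : ℕ) :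
    (I ^ n • ⊤ : Submodule R M) →ₛₗ[algebraMap R (reesAlgebra I)] ReesMod M I where
  toFun x := ⟨PolynomialModule.single R n x.1, by
    intro i
    rw [PolynomialModule.coeff_single, Finsupp.single_apply]
    split_ifs with h
    · subst h
      exact x.2
    · exact Submodule.zero_mem _⟩
  map_add' x y := Subtype.ext (PolynomialModule.single_add n x.1 y.1)
  map_smul' r x := Subtype.ext (by
    refine Eq.trans ?_ (reesMod_algebraMap_smul I r _).symm
    exact PolynomialModule.single_smul _ _ _)

theorem step_piece [IsNoetherianRing R] (I K : Ideal R) (n : ℕ) :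
    associatedPrimes R (↥(I ^ n • ⊤ : Submodule R M) ⧸
        (K • ⊤ : Submodule R (I ^ n • ⊤ : Submodule R M))) ⊆
      Ideal.comap (algebraMap R (reesAlgebra I)) '' associatedPrimes (reesAlgebra I)
        (ReesMod M I ⧸ (K.map (algebraMap R (reesAlgebra I)) • ⊤ :
          Submodule (reesAlgebra I) (ReesMod M I))) := by
  intro p hp
  have hle : (K • ⊤ : Submodule R (I ^ n • ⊤ : Submodule R M)) ≤
      (K.map (algebraMap R (reesAlgebra I)) • ⊤ :
          Submodule (reesAlgebra I) (ReesMod M I)).comap (reesIncl I n) := by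
    rw [Submodule.smul_le]
    intro k hk x _
    rw [Submodule.mem_comap, map_smulₛₗ]
    exact Submodule.smul_mem_smul (Ideal.mem_map_of_mem _ hk) trivial
  refine exists_comap_eq_of_semilinear _ (Submodule.mapQ _ _ (reesIncl I n) hle) ?_ hp
  rw [injective_iff_map_eq_zero]
  intro x hx
  obtain ⟨x, rfl⟩ := Submodule.Quotient.mk_surjective _ x
  rw [Submodule.mapQ_apply, Submodule.Quotient.mk_eq_zero] at hx
  rw [Submodule.Quotient.mk_eq_zero]
  have h := reesMod_coeff I K n _ hx
  have h2 : ((reesIncl I n x).1).coeff n = x.1 := by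
    change (PolynomialModule.single R n x.1).coeff n = _
    simp
  rw [h2] at h
  have h3 : (K • ⊤ : Submodule R (I ^ n • ⊤ : Submodule R M)).map (Submodule.subtype _)
      = K • (I ^ n • ⊤ : Submodule R M) := by
    rw [Submodule.map_smul'', Submodule.map_top, Submodule.range_subtype]
  rw [← h3] at h
  obtain ⟨z, hz, hzx⟩ := h
  rwa [← Subtype.ext hzx]

theorem step_ses (K : Ideal R) (X : Submodule R M) :
    associatedPrimes R (M ⧸ (K • X)) ⊆
      associatedPrimes R (X ⧸ (K • ⊤ : Submodule R X)) ∪ associatedPrimes R (M ⧸ X) := by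
  have h3 : (K • ⊤ : Submodule R X).map X.subtype = K • X := by
    rw [Submodule.map_smul'', Submodule.map_top, Submodule.range_subtype]
  refine associatedPrimes.subset_union_of_exact
    (f := Submodule.mapQ _ _ X.subtype (Submodule.map_le_iff_le_comap.mp h3.le))
    (g := Submodule.factor (Submodule.smul_le_right)) ?_ ?_
  · rw [injective_iff_map_eq_zero]
    intro x hx
    obtain ⟨x, rfl⟩ := Submodule.Quotient.mk_surjective _ x
    rw [Submodule.mapQ_apply, Submodule.Quotient.mk_eq_zero, ← h3] at hx
    rw [Submodule.Quotient.mk_eq_zero]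
    obtain ⟨z, hz, hzx⟩ := hx
    rwa [← Subtype.ext hzx]
  · intro y
    obtain ⟨y, rfl⟩ := Submodule.Quotient.mk_surjective _ y
    constructor
    · intro h
      have h' : y ∈ X := (Submodule.Quotient.mk_eq_zero X).mp h
      exact ⟨Submodule.Quotient.mk ⟨y, h'⟩, rfl⟩
    · rintro ⟨x, hx⟩
      obtain ⟨x, rfl⟩ := Submodule.Quotient.mk_surjective _ x
      rw [← hx]
      exact (Submodule.Quotient.mk_eq_zero X).mpr x.2

theorem step_pow [IsNoetherianRing R] (I : Ideal R) (n : ℕ) :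
    associatedPrimes R (M ⧸ (I ^ n • ⊤ : Submodule R M)) ⊆
      Ideal.comap (algebraMap R (reesAlgebra I)) '' associatedPrimes (reesAlgebra I)
        (ReesMod M I ⧸ (I.map (algebraMap R (reesAlgebra I)) • ⊤ :
          Submodule (reesAlgebra I) (ReesMod M I))) := by
  induction n with
  | zero =>
    have : Subsingleton (M ⧸ (I ^ 0 • ⊤ : Submodule R M)) := by
      rw [Submodule.Quotient.subsingleton_iff]
      simp
    rw [associatedPrimes.eq_empty_of_subsingleton]
    exact Set.empty_subset _
  | succ n ih =>
    rw [pow_succ', ← smul_eq_mul, smul_assoc]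
    exact (step_ses I _).trans (Set.union_subset (step_piece I I n) ih)

instance reesMod_finite [IsNoetherianRing R] [Module.Finite R M] (I : Ideal R) :
    Module.Finite (reesAlgebra I) (ReesMod M I) := by
  change Module.Finite (reesAlgebra I) ↥((I.stableFiltration (⊤ : Submodule R M)).submodule)
  rw [Module.Finite.iff_fg]
  exact (Ideal.Filtration.submodule_fg_iff_stable _ (fun _ => IsNoetherian.noetherian _)).mpr
    (I.stableFiltration_stable ⊤)

end step

universe u v

theorem multipowers_aux (t : ℕ) : ∀ (R : Type u) (M : Type v) [CommRing R] [AddCommGroup M]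
    [Module R M] [IsNoetherianRing R] [Module.Finite R M] (I : Fin t → Ideal R),
    (⋃ n : Fin t → ℕ,
      associatedPrimes R (M ⧸ ((∏ i, I i ^ n i) • ⊤ : Submodule R M))).Finite := by
  induction t with
  | zero =>
    intro R M _ _ _ _ _ I
    exact Set.finite_iUnion fun n => associatedPrimes.finite R _
  | succ t ih =>
    intro R M _ _ _ _ _ I
    have h1 := (ih (reesAlgebra (I 0)) (ReesMod M (I 0))
      (fun i => (I i.succ).map (algebraMap R (reesAlgebra (I 0))))).image
        (Ideal.comap (algebraMap R (reesAlgebra (I 0))))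
    have h2 := (associatedPrimes.finite (reesAlgebra (I 0)) (ReesMod M (I 0) ⧸
      ((I 0).map (algebraMap R (reesAlgebra (I 0))) • ⊤ :
          Submodule (reesAlgebra (I 0)) (ReesMod M (I 0))))).image
        (Ideal.comap (algebraMap R (reesAlgebra (I 0))))
    refine (h1.union h2).subset (Set.iUnion_subset fun n => ?_)
    rw [Fin.prod_univ_succ, mul_comm, ← smul_eq_mul, smul_assoc]
    refine (step_ses _ _).trans (Set.union_subset_union ?_ (step_pow _ _))
    refine (step_piece _ _ _).trans (Set.image_mono ?_)
    have h3 : (∏ i : Fin t, I i.succ ^ n i.succ).map (algebraMap R (reesAlgebra (I 0))) =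
        ∏ i : Fin t, (I i.succ).map (algebraMap R (reesAlgebra (I 0))) ^ n i.succ := by
      have := map_prod (Ideal.mapHom (algebraMap R (reesAlgebra (I 0))))
        (fun i : Fin t => I i.succ ^ n i.succ) Finset.univ
      simpa only [Ideal.mapHom_apply, Ideal.map_pow] using this
    rw [h3]
    exact Set.subset_iUnion (fun m : Fin t → ℕ => associatedPrimes (reesAlgebra (I 0))
      (ReesMod M (I 0) ⧸ ((∏ i, (I i.succ).map (algebraMap R (reesAlgebra (I 0))) ^ m i) • ⊤ :
        Submodule (reesAlgebra (I 0)) (ReesMod M (I 0))))) (fun i => n i.succ)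

/-- The set `⋃ₙ Ass(M / I₁^{n₁}⋯I_t^{n_t} M)` over all multi-exponents is finite. -/
theorem associatedPrimes_multipowers_finite [IsNoetherianRing R] [Module.Finite R M]
    (t : ℕ) (I : Fin t → Ideal R) :
    (⋃ n : Fin t → ℕ,
      associatedPrimes R (M ⧸ ((∏ i, I i ^ n i) • ⊤ : Submodule R M))).Finite := by
  exact multipowers_aux t R M I
end
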